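/- arXiv:2108.07529 — 4 statements merged into one kernel-verified Lean document; each statement's English description precedes it below -/
import Mathlib

section
/- Higher-order Euler property: let X be an Euler vector field on an open set U ⊆ ℝ^d × ℝ^d and let k ≥ 1 be an integer. If a smooth function f : U → ℝ vanishes to order k on Δ ∩ U, then the function Xf − k·f vanishes to order k + 1 on Δ ∩ U. -/
open Set

noncomputable section

/-- Points of `ℝ^d × ℝ^d`. -/
abbrev Pt (d : ℕ) := EuclideanSpace ℝ (Fin d) × EuclideanSpace ℝ (Fin d)

/-- The diagonal `Δ = {(x,x)}` in `ℝ^d × ℝ^d`. -/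
def Diag (d : ℕ) : Set (Pt d) := {p | p.1 = p.2}

/-- The action `Xf : q ↦ Df(q)(X(q))` of a vector field on a function. -/
def vfApply {d : ℕ} (X : Pt d → Pt d) (f : Pt d → ℝ) : Pt d → ℝ :=
  fun q => fderiv ℝ f q (X q)

/-- `g` vanishes to order `m` on `Δ ∩ U`: all iterated Fréchet derivatives of order `< m`
vanish at every point of `Δ ∩ U`. -/
def VanishesToOrder {d : ℕ} (m : ℕ) (g : Pt d → ℝ) (U : Set (Pt d)) : Prop :=
  ∀ k < m, ∀ p ∈ Diag d ∩ U, iteratedFDeriv ℝ k g p = 0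

/-- `X` is an Euler vector field on the open set `U ⊆ ℝ^d × ℝ^d`: it is smooth, its first
`d` components vanish identically, and for every smooth `f` vanishing on `Δ ∩ U` the
function `Xf − f` vanishes to order `2` on `Δ ∩ U`. -/
structure IsEulerVF {d : ℕ} (X : Pt d → Pt d) (U : Set (Pt d)) : Prop where
  smooth : ContDiffOn ℝ (⊤ : ℕ∞) X U
  fiber : ∀ q ∈ U, (X q).1 = 0
  euler : ∀ f : Pt d → ℝ, ContDiffOn ℝ (⊤ : ℕ∞) f U → (∀ p ∈ Diag d ∩ U, f p = 0) →
    VanishesToOrder 2 (fun q => vfApply X f q - f q) U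

/-!
An Euler vector field `X` vanishes on the diagonal, and its linearization there is the projection
`P (x, y) = (0, y - x)`: test the Euler condition on linear functionals of `y - x`. The proof is by
induction on `k`, using that `g` vanishes to order `k + 1` as soon as `g` vanishes and all `∂_v g`
vanish to order `k`. Since `∂_v (X f) = X (∂_v f) + Df (∂_v X)`,

  `∂_v (X f - (k + 1) f) = (X (∂_v f) - k ∂_v f) + Df (∂_v X - P v) + Df (P v - v)`.

The first summand is covered by the induction hypothesis for `∂_v f`. In the second, `Df` vanishes
to order `k` and `∂_v X - P v` vanishes on the diagonal. In the third, `P v - v` is tangent to the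
diagonal, and differentiating along the diagonal does not lower the order of vanishing.
-/

open Filter
open scoped ContDiff Topology

section Vanishing

variable {𝕜 : Type*} [NontriviallyNormedField 𝕜]
  {E : Type*} [NormedAddCommGroup E] [NormedSpace 𝕜 E]
  {F : Type*} [NormedAddCommGroup F] [NormedSpace 𝕜 F]
  {G : Type*} [NormedAddCommGroup G] [NormedSpace 𝕜 G]

variable (𝕜) in
/-- Vanishing to order `m` at a point: all iterated derivatives of order `< m` are zero there. This
is the pointwise, vector-valued form of `VanishesToOrder`. -/
def VanishesToOrderAt (m : ℕ) (g : E → F) (p : E) : Prop :=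
  ∀ j < m, iteratedFDeriv 𝕜 j g p = 0

theorem iteratedFDeriv_fderiv_apply_const {g : E → F} {p : E} {j : ℕ}
    (hg : ContDiffAt 𝕜 (j + 1) g p) (v : E) (u : Fin j → E) :
    iteratedFDeriv 𝕜 j (fun q ↦ fderiv 𝕜 g q v) p u =
      iteratedFDeriv 𝕜 (j + 1) g p (Fin.snoc u v) := by
  have h := (ContinuousLinearMap.apply 𝕜 F v).iteratedFDeriv_comp_left hg.fderiv_right_succ le_rfl
  rw [iteratedFDeriv_succ_apply_right, Fin.init_snoc, Fin.snoc_last]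
  exact congr($h u)

theorem norm_iteratedFDeriv_clm_apply_of_contDiffAt {g : E → G →L[𝕜] F} {R : E → G} {p : E}
    {n : ℕ} (hg : ContDiffAt 𝕜 n g p) (hR : ContDiffAt 𝕜 n R p) :
    ‖iteratedFDeriv 𝕜 n (fun q ↦ g q (R q)) p‖ ≤ ∑ i ∈ Finset.range (n + 1),
      n.choose i * ‖iteratedFDeriv 𝕜 i g p‖ * ‖iteratedFDeriv 𝕜 (n - i) R p‖ := by
  obtain ⟨V, hV, hVo, hpV⟩ :=
    eventually_nhds_iff.1 ((hg.eventually (by simp)).and (hR.eventually (by simp)))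
  simpa only [iteratedFDerivWithin_of_isOpen _ hVo hpV] using
    norm_iteratedFDerivWithin_clm_apply (fun q hq ↦ (hV q hq).1.contDiffWithinAt)
      (fun q hq ↦ (hV q hq).2.contDiffWithinAt) hVo.uniqueDiffOn hpV le_rfl

theorem contDiffAt_natCast_of_contDiffOn_infty {U : Set E} (hU : IsOpen U) {g : E → F}
    (hg : ContDiffOn 𝕜 ∞ g U) {p : E} (hp : p ∈ U) (n : ℕ) : ContDiffAt 𝕜 n g p :=
  (hg.contDiffAt (hU.mem_nhds hp)).of_le (by exact_mod_cast le_top)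

theorem contDiffAt_fderiv_apply {f : E → F} {X : E → E} {p : E} {n : ℕ}
    (hf : ContDiffAt 𝕜 (n + 1 : ℕ) f p) (hX : ContDiffAt 𝕜 n X p) :
    ContDiffAt 𝕜 n (fun q ↦ fderiv 𝕜 f q (X q)) p :=
  (hf.fderiv_right (by simp)).clm_apply hX

theorem fderiv_apply_eq_zero_of_eventually_line {g : E → F} {p w : E}
    (hg : DifferentiableAt 𝕜 g p) (h : ∀ᶠ t : 𝕜 in 𝓝 0, g (p + t • w) = 0) :
    fderiv 𝕜 g p w = 0 := by
  have h_line : (fun t : 𝕜 ↦ g (p + t • w)) =ᶠ[𝓝 0] fun _ ↦ 0 := h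
  rw [← hg.lineDeriv_eq_fderiv, lineDeriv, h_line.deriv_eq, deriv_const]

namespace VanishesToOrderAt

variable {g h : E → F} {p : E} {m n : ℕ}

theorem succ_iff : VanishesToOrderAt 𝕜 (m + 1) g p ↔
    g p = 0 ∧ VanishesToOrderAt 𝕜 m (fderiv 𝕜 g) p := by
  simp only [VanishesToOrderAt, Nat.forall_lt_succ_left,
    ← norm_eq_zero (a := iteratedFDeriv 𝕜 _ _ p), norm_iteratedFDeriv_zero,
    norm_iteratedFDeriv_fderiv, norm_eq_zero (a := g p)]

theorem one_iff : VanishesToOrderAt 𝕜 1 g p ↔ g p = 0 :=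
  succ_iff.trans (and_iff_left fun _ hj ↦ absurd hj (Nat.not_lt_zero _))

theorem succ_iff_forall_fderiv_apply (hg : ContDiffAt 𝕜 m g p) :
    VanishesToOrderAt 𝕜 (m + 1) g p ↔
      g p = 0 ∧ ∀ v, VanishesToOrderAt 𝕜 m (fun q ↦ fderiv 𝕜 g q v) p := by
  have hgj : ∀ j < m, ContDiffAt 𝕜 (j + 1) g p := fun j hj ↦ hg.of_le (by exact_mod_cast hj)
  constructor
  · refine fun h ↦ ⟨(succ_iff.1 h).1, fun v j hj ↦ ?_⟩
    ext u
    rw [iteratedFDeriv_fderiv_apply_const (hgj j hj), h (j + 1) (by omega)]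
    rfl
  · refine fun ⟨h_zero, h_fderiv⟩ ↦ Nat.forall_lt_succ_left.2
      ⟨one_iff.2 h_zero 0 one_pos, fun j hj ↦ ?_⟩
    ext u
    rw [← Fin.snoc_init_self u, ← iteratedFDeriv_fderiv_apply_const (hgj j hj),
      h_fderiv _ j hj]
    rfl

protected theorem congr (hg : VanishesToOrderAt 𝕜 m g p) (hgh : g =ᶠ[𝓝 p] h) :
    VanishesToOrderAt 𝕜 m h p := fun j hj ↦
  (hgh.iteratedFDeriv 𝕜 j).eq_of_nhds.symm.trans (hg j hj)

protected theorem add (hg : VanishesToOrderAt 𝕜 (m + 1) g p) (hh : VanishesToOrderAt 𝕜 (m + 1) h p)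
    (hgm : ContDiffAt 𝕜 m g p) (hhm : ContDiffAt 𝕜 m h p) :
    VanishesToOrderAt 𝕜 (m + 1) (fun q ↦ g q + h q) p := fun j hj ↦ by
  have hjm : (j : ℕ∞ω) ≤ m := by exact_mod_cast Nat.lt_succ_iff.1 hj
  rw [fun_iteratedFDeriv_add_apply (hgm.of_le hjm) (hhm.of_le hjm), hg j hj, hh j hj, add_zero]

protected theorem clm_apply {A : E → G →L[𝕜] F} {R : E → G}
    (hA : VanishesToOrderAt 𝕜 m A p) (hR : VanishesToOrderAt 𝕜 (n + 1) R p)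
    (hAmn : ContDiffAt 𝕜 (m + n : ℕ) A p) (hRmn : ContDiffAt 𝕜 (m + n : ℕ) R p) :
    VanishesToOrderAt 𝕜 (m + n + 1) (fun q ↦ A q (R q)) p := fun j hj ↦ by
  have hjmn : (j : ℕ∞ω) ≤ (m + n : ℕ) := by exact_mod_cast Nat.lt_succ_iff.1 hj
  rw [← norm_le_zero_iff]
  refine (norm_iteratedFDeriv_clm_apply_of_contDiffAt (hAmn.of_le hjmn) (hRmn.of_le hjmn)).trans
    (Finset.sum_eq_zero fun i _ ↦ ?_).le
  rcases lt_or_ge i m with him | him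
  · rw [hA i him, norm_zero, mul_zero, zero_mul]
  · rw [hR (j - i) (by omega), norm_zero, mul_zero]

end VanishesToOrderAt

end Vanishing

section Euler

variable {𝕜 : Type*} [RCLike 𝕜]
  {E : Type*} [NormedAddCommGroup E] [NormedSpace 𝕜 E]
  {F : Type*} [NormedAddCommGroup F] [NormedSpace 𝕜 F]

theorem fderiv_fderiv_apply_comm {f : E → F} {X : E → E} {q : E}
    (hf : ContDiffAt 𝕜 2 f q) (hX : DifferentiableAt 𝕜 X q) (v : E) :
    fderiv 𝕜 (fun x ↦ fderiv 𝕜 f x (X x)) q v =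
      fderiv 𝕜 (fun x ↦ fderiv 𝕜 f x v) q (X q) + fderiv 𝕜 f q (fderiv 𝕜 X q v) := by
  have hdf : DifferentiableAt 𝕜 (fderiv 𝕜 f) q :=
    (hf.fderiv_right (m := 1) (by norm_num)).differentiableAt one_ne_zero
  have hsymm : IsSymmSndFDerivAt 𝕜 f q := hf.isSymmSndFDerivAt (by simp)
  rw [fderiv_clm_apply hdf hX, fderiv_clm_apply hdf (differentiableAt_const v)]
  simp [hsymm.eq v (X q), add_comm]

theorem fderiv_fderiv_apply_sub_smul {f : E → F} {X : E → E} {q : E}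
    (hf : ContDiffAt 𝕜 2 f q) (hX : DifferentiableAt 𝕜 X q) (c : 𝕜) (v w : E) :
    fderiv 𝕜 (fun x ↦ fderiv 𝕜 f x (X x) - (c + 1) • f x) q v =
      fderiv 𝕜 (fun x ↦ fderiv 𝕜 f x v) q (X q) - c • fderiv 𝕜 f q v +
        fderiv 𝕜 f q (fderiv 𝕜 X q v - w) + fderiv 𝕜 f q (w - v) := by
  have hdf : DifferentiableAt 𝕜 f q := hf.differentiableAt two_ne_zero
  have hdXf : DifferentiableAt 𝕜 (fun x ↦ fderiv 𝕜 f x (X x)) q :=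
    ((hf.fderiv_right (m := 1) (by norm_num)).differentiableAt one_ne_zero).clm_apply hX
  rw [fderiv_fun_sub hdXf (hdf.fun_const_smul _), fderiv_fun_const_smul hdf, sub_apply, smul_apply,
    fderiv_fderiv_apply_comm hf hX, map_sub, map_sub]
  module

theorem VanishesToOrderAt.fderiv_apply_of_eventually_line {m : ℕ} {g : E → F} {p w : E}
    (hgm : ContDiffAt 𝕜 (m + 1 : ℕ) g p)
    (hg : ∀ᶠ t : 𝕜 in 𝓝 0, VanishesToOrderAt 𝕜 m g (p + t • w)) :
    VanishesToOrderAt 𝕜 m (fun q ↦ fderiv 𝕜 g q w) p := by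
  induction m generalizing g with
  | zero => exact fun _ hj ↦ absurd hj (Nat.not_lt_zero _)
  | succ m ih =>
    have h_near : ∀ᶠ q in 𝓝 p, ContDiffAt 𝕜 (m + 2 : ℕ) g q := hgm.eventually (by simp)
    have h_line : Tendsto (fun t : 𝕜 ↦ p + t • w) (𝓝 0) (𝓝 p) :=
      Continuous.tendsto' (by fun_prop) _ _ (by simp)
    have hdg : ∀ u, ContDiffAt 𝕜 (m + 1 : ℕ) (fun q ↦ fderiv 𝕜 g q u) p := fun u ↦
      contDiffAt_fderiv_apply hgm contDiffAt_const
    refine (succ_iff_forall_fderiv_apply ((hdg w).of_le (by simp))).2 ⟨?_, fun v ↦ ?_⟩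
    · exact fderiv_apply_eq_zero_of_eventually_line (hgm.differentiableAt (by simp))
        (hg.mono fun t ht ↦ (succ_iff.1 ht).1)
    · have h_line_v : ∀ᶠ t : 𝕜 in 𝓝 0,
          VanishesToOrderAt 𝕜 m (fun q ↦ fderiv 𝕜 g q v) (p + t • w) := by
        filter_upwards [hg, h_line.eventually h_near] with t ht hgt
        exact ((succ_iff_forall_fderiv_apply (hgt.of_le (by simp))).1 ht).2 v
      refine (ih (hdg v) h_line_v).congr (h_near.mono fun q hq ↦ ?_)
      simpa using (fderiv_fderiv_apply_comm (hq.of_le (by simp)) (differentiableAt_const w) v).symm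

theorem VanishesToOrderAt.fderiv_apply_sub_smul_succ {k : ℕ} {f : E → F} {X : E → E}
    {P : E →L[𝕜] E} {p : E} {c : 𝕜} (hfk : ContDiffAt 𝕜 (k + 1 + 1 : ℕ) f p)
    (hXk : ContDiffAt 𝕜 (k + 1 : ℕ) X p) (hX_zero : X p = 0) (hXP : HasFDerivAt X P p)
    (hf : VanishesToOrderAt 𝕜 (k + 1) f p)
    (h_deriv : ∀ v, VanishesToOrderAt 𝕜 (k + 1)
      (fun q ↦ fderiv 𝕜 (fun x ↦ fderiv 𝕜 f x v) q (X q) - c • fderiv 𝕜 f q v) p)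
    (h_tangent : ∀ v, VanishesToOrderAt 𝕜 (k + 1) (fun q ↦ fderiv 𝕜 f q (P v - v)) p) :
    VanishesToOrderAt 𝕜 (k + 1 + 1) (fun q ↦ fderiv 𝕜 f q (X q) - (c + 1) • f q) p := by
  obtain ⟨hf_zero, hf_fderiv⟩ := succ_iff.1 hf
  have hfk' : ContDiffAt 𝕜 (k + 1 : ℕ) f p := hfk.of_le (by simp)
  have hXk' : ContDiffAt 𝕜 k X p := hXk.of_le (by simp)
  have hdf : ∀ v, ContDiffAt 𝕜 (k + 1 : ℕ) (fun q ↦ fderiv 𝕜 f q v) p := fun v ↦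
    contDiffAt_fderiv_apply hfk contDiffAt_const
  refine (succ_iff_forall_fderiv_apply
    ((contDiffAt_fderiv_apply hfk hXk).sub (hfk'.const_smul _))).2
    ⟨by simp [hX_zero, hf_zero], fun v ↦ ?_⟩
  have hR : ContDiffAt 𝕜 k (fun q ↦ fderiv 𝕜 X q v - P v) p :=
    (contDiffAt_fderiv_apply hXk contDiffAt_const).sub contDiffAt_const
  have hR_van : VanishesToOrderAt 𝕜 1 (fun q ↦ fderiv 𝕜 X q v - P v) p :=
    one_iff.2 (by rw [hXP.fderiv, sub_self])
  have h_remainder : VanishesToOrderAt 𝕜 (k + 1)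
      (fun q ↦ fderiv 𝕜 f q (fderiv 𝕜 X q v - P v)) p :=
    hf_fderiv.clm_apply hR_van (hfk'.fderiv_right (by simp)) hR
  have h_deriv_smooth : ContDiffAt 𝕜 k
      (fun q ↦ fderiv 𝕜 (fun x ↦ fderiv 𝕜 f x v) q (X q) - c • fderiv 𝕜 f q v) p :=
    (contDiffAt_fderiv_apply (hdf v) hXk').sub (((hdf v).of_le (by simp)).const_smul _)
  have h_remainder_smooth := contDiffAt_fderiv_apply hfk' hR
  refine (((h_deriv v).add h_remainder h_deriv_smooth h_remainder_smooth).add (h_tangent v)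
    (h_deriv_smooth.add h_remainder_smooth) ((hdf _).of_le (by simp))).congr ?_
  filter_upwards [hfk.eventually (by simp), hXk.eventually (by simp)] with q hfq hXq
  exact (fderiv_fderiv_apply_sub_smul (hfq.of_le (by norm_cast; omega))
    (hXq.differentiableAt (by simp)) c v (P v)).symm

variable (𝕜) in
/-- `X` is Euler-like along `S` with normal projection `P`: it vanishes on `S`, its linearization
at each point of `S` is `P`, and the directions `P v - v` are tangent to `S`, in the sense that
short segments in these directions starting on `S` remain in `S`. -/
structure IsEulerLikeAlong (X : E → E) (P : E →L[𝕜] E) (S : Set E) : Prop where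
  eq_zero : ∀ p ∈ S, X p = 0
  hasFDerivAt : ∀ p ∈ S, HasFDerivAt X P p
  tangent : ∀ p ∈ S, ∀ v, ∀ᶠ t : 𝕜 in 𝓝 0, p + t • (P v - v) ∈ S

theorem euler_vanishesToOrder_succ_general {X : E → E} {P : E →L[𝕜] E} {S : Set E}
    (hX : IsEulerLikeAlong 𝕜 X P S) (k : ℕ) (hXk : ∀ p ∈ S, ContDiffAt 𝕜 k X p) (f : E → F)
    (hf : ∀ p ∈ S, ContDiffAt 𝕜 (k + 1 : ℕ) f p) (hvan : ∀ p ∈ S, VanishesToOrderAt 𝕜 k f p) :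
    ∀ p ∈ S, VanishesToOrderAt 𝕜 (k + 1) (fun q ↦ fderiv 𝕜 f q (X q) - (k : 𝕜) • f q) p := by
  induction k generalizing f with
  | zero => exact fun p hp ↦ VanishesToOrderAt.one_iff.2 (by simp [hX.eq_zero p hp])
  | succ k ih =>
    have hdf : ∀ v, ∀ p ∈ S, VanishesToOrderAt 𝕜 k (fun q ↦ fderiv 𝕜 f q v) p := fun v p hp ↦
      ((VanishesToOrderAt.succ_iff_forall_fderiv_apply
        ((hf p hp).of_le (by norm_cast; omega))).1 (hvan p hp)).2 v
    intro p hp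
    rw [Nat.cast_succ]
    exact .fderiv_apply_sub_smul_succ (hf p hp) (hXk p hp) (hX.eq_zero p hp)
      (hX.hasFDerivAt p hp) (hvan p hp)
      (fun v ↦ ih (fun q hq ↦ (hXk q hq).of_le (by simp)) _
        (fun q hq ↦ contDiffAt_fderiv_apply (hf q hq) contDiffAt_const) (hdf v) p hp)
      (fun v ↦ .fderiv_apply_of_eventually_line (hf p hp) ((hX.tangent p hp v).mono fun _ ↦ hvan _))

end Euler

section Diagonal

variable {d : ℕ} {X : Pt d → Pt d} {U : Set (Pt d)}

variable (d) in
/-- The linear map `(x, y) ↦ (0, y - x)`, the projection of `ℝ^d × ℝ^d` onto the fibre direction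
along the diagonal. -/
def fiberProj : Pt d →L[ℝ] Pt d :=
  .inr ℝ _ _ ∘L (.snd ℝ _ _ - .fst ℝ _ _)

theorem eventually_add_smul_fiberProj_sub_mem (hU : IsOpen U) {p : Pt d} (hp : p ∈ Diag d ∩ U)
    (v : Pt d) : ∀ᶠ t : ℝ in 𝓝 0, p + t • (fiberProj d v - v) ∈ Diag d ∩ U := by
  have h_tendsto : Tendsto (fun t : ℝ ↦ p + t • (fiberProj d v - v)) (𝓝 0) (𝓝 p) :=
    Continuous.tendsto' (by fun_prop) _ _ (by simp)
  filter_upwards [h_tendsto.eventually_mem (hU.mem_nhds hp.2)] with t ht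
  have hp_diag : p.1 = p.2 := hp.1
  refine ⟨?_, ht⟩
  change (p + t • (fiberProj d v - v)).1 = (p + t • (fiberProj d v - v)).2
  simp [fiberProj, hp_diag]

namespace IsEulerVF

protected theorem differentiableAt (hU : IsOpen U) (hX : IsEulerVF X U) {p : Pt d} (hp : p ∈ U) :
    DifferentiableAt ℝ X p :=
  (contDiffAt_natCast_of_contDiffOn_infty hU hX.smooth hp 1).differentiableAt (by simp)

theorem clm_apply_eq (hU : IsOpen U) (hX : IsEulerVF X U) {p : Pt d} (hp : p ∈ Diag d ∩ U)
    (ℓ : Pt d →L[ℝ] ℝ) (hℓ : ∀ q ∈ Diag d, ℓ q = 0) :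
    ℓ (X p) = 0 ∧ ∀ v, ℓ (fderiv ℝ X p v) = ℓ v := by
  have hXp : DifferentiableAt ℝ X p := hX.differentiableAt hU hp.2
  have h_van : VanishesToOrderAt ℝ 2 (fun q ↦ ℓ (X q) - ℓ q) p := fun j hj ↦ by
    simpa [vfApply] using hX.euler ℓ ℓ.contDiff.contDiffOn (fun q hq ↦ hℓ q hq.1) j hj p hp
  obtain ⟨h_value, h_fderiv⟩ := VanishesToOrderAt.succ_iff.1 h_van
  have h_hasFDeriv : HasFDerivAt (fun q ↦ ℓ (X q) - ℓ q) (ℓ ∘L fderiv ℝ X p - ℓ) p :=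
    (ℓ.hasFDerivAt.comp p hXp.hasFDerivAt).sub ℓ.hasFDerivAt
  rw [VanishesToOrderAt.one_iff, h_hasFDeriv.fderiv, sub_eq_zero] at h_fderiv
  exact ⟨by simpa [hℓ p hp.1] using h_value, fun v ↦ congr($h_fderiv v)⟩

theorem fst_fderiv_apply_eq_zero (hU : IsOpen U) (hX : IsEulerVF X U) {p : Pt d} (hp : p ∈ U)
    (v : Pt d) : (fderiv ℝ X p v).1 = 0 := by
  have h_fst : (fun q ↦ (X q).1) =ᶠ[𝓝 p] fun _ ↦ 0 :=
    eventually_of_mem (hU.mem_nhds hp) hX.fiber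
  have h_unique := (hX.differentiableAt hU hp).hasFDerivAt.fst.unique
    ((hasFDerivAt_const _ p).congr_of_eventuallyEq h_fst)
  exact congr($h_unique v)

theorem eq_zero_and_fderiv_eq (hU : IsOpen U) (hX : IsEulerVF X U) {p : Pt d}
    (hp : p ∈ Diag d ∩ U) : X p = 0 ∧ fderiv ℝ X p = fiberProj d := by
  have h_dual (ℓ : StrongDual ℝ (EuclideanSpace ℝ (Fin d))) :=
    hX.clm_apply_eq hU hp (ℓ ∘L (.snd ℝ _ _ - .fst ℝ _ _)) fun q (hq : q.1 = q.2) ↦ by simp [hq]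
  have hX_fst : (X p).1 = 0 := hX.fiber p hp.2
  constructor
  · refine Prod.ext hX_fst ((SeparatingDual.eq_iff_forall_dual_eq (R := ℝ)).2 fun ℓ ↦ ?_)
    simpa [hX_fst] using (h_dual ℓ).1
  · refine ContinuousLinearMap.ext fun v ↦ Prod.ext ?_
      ((SeparatingDual.eq_iff_forall_dual_eq (R := ℝ)).2 fun ℓ ↦ ?_)
    · simpa [fiberProj] using hX.fst_fderiv_apply_eq_zero hU hp.2 v
    · simpa [fiberProj, hX.fst_fderiv_apply_eq_zero hU hp.2 v] using (h_dual ℓ).2 v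

theorem isEulerLikeAlong (hU : IsOpen U) (hX : IsEulerVF X U) :
    IsEulerLikeAlong ℝ X (fiberProj d) (Diag d ∩ U) where
  eq_zero _ hp := (hX.eq_zero_and_fderiv_eq hU hp).1
  hasFDerivAt _ hp := (hX.eq_zero_and_fderiv_eq hU hp).2 ▸ (hX.differentiableAt hU hp.2).hasFDerivAt
  tangent _ hp := eventually_add_smul_fiberProj_sub_mem hU hp

end IsEulerVF

end Diagonal

/-- higher-order Euler property: if `X` is an Euler vector field on an
open set `U ⊆ ℝ^d × ℝ^d`, `k ≥ 1`, and `f` is smooth on `U` and vanishes to order `k` on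
`Δ ∩ U`, then `Xf − k·f` vanishes to order `k + 1` on `Δ ∩ U`. -/
theorem euler_vanishesToOrder_succ {d : ℕ} {X : Pt d → Pt d} {U : Set (Pt d)}
    (hU : IsOpen U) (hX : IsEulerVF X U) (k : ℕ) (hk : 1 ≤ k) (f : Pt d → ℝ)
    (hf : ContDiffOn ℝ (⊤ : ℕ∞) f U) (hvan : VanishesToOrder k f U) :
    VanishesToOrder (k + 1) (fun q => vfApply X f q - (k : ℝ) * f q) U := by
  exact fun j hj p hp ↦ euler_vanishesToOrder_succ_general (hX.isEulerLikeAlong hU) k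
    (fun q hq ↦ contDiffAt_natCast_of_contDiffOn_infty hU hX.smooth hq.2 k) f
    (fun q hq ↦ contDiffAt_natCast_of_contDiffOn_infty hU hf hq.2 (k + 1))
    (fun q hq i hi ↦ hvan i hi q hq) p hp j hj
end
end

section
/- Residue vanishing (Corollary 2.9, smooth case): let n ≥ 1, let k ≥ 1 be an integer, and let u : ℝⁿ \ {0} → ℂ be smooth and positively homogeneous of degree −n + k. Then for every multi-index β with |β| = k, the iterated partial derivative ∂^β u (which is smooth and positively homogeneous of degree −n) satisfies ∫_{S^{n−1}} ∂^β u dS = 0. -/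
open Set MeasureTheory

noncomputable section

/-- Iterated partial derivative of a function `ℝⁿ → ℂ` along a list of coordinate
directions; a multi-index `β` with `|β| = k` corresponds to (any) list of length `k`
containing each index `i` exactly `βᵢ` times. -/
def multiPartialDeriv {n : ℕ} : List (Fin n) →
    (EuclideanSpace ℝ (Fin n) → ℂ) → (EuclideanSpace ℝ (Fin n) → ℂ)
  | [], f => f
  | i :: L, f => fun ξ => fderiv ℝ (multiPartialDeriv L f) ξ (EuclideanSpace.single i 1)

/-!
For a skew-adjoint `A`, the integral of `g ∘ exp (tA)` over the sphere does not depend on `t`, so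
`∫ Dg(x)(Ax) dS = 0`. Apply this to `g = ⟪eᵢ, ·⟫ v` and to the rotations
`Aᵢ x = ⟪eᵢ, x⟫ w - ⟪w, x⟫ eᵢ`, for an orthonormal basis `e` and a fixed vector `w`. Summing over
`i` gives, on the unit sphere of an `n`-dimensional space, the vanishing of the integral of
`Dv(x) w - ⟪w, x⟫ Dv(x) x - (n - 1) ⟪w, x⟫ v(x)`. When `v` is homogeneous of degree `1 - n`, Euler's
identity `Dv(x) x = (1 - n) v(x)` cancels the last two terms, leaving `∫ Dv(x) w dS = 0`. A
derivative of order `k - 1` of `u` is such a `v`.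
-/

open Metric Module Filter Topology InnerProductSpace

open scoped RealInnerProductSpace

section PosHomogeneous

variable {E F : Type*} [NormedAddCommGroup E] [NormedSpace ℝ E] [NormedAddCommGroup F]
  [NormedSpace ℝ F] {a : ℝ} {v : E → F}

/-- Positive homogeneity of real degree `a` on the punctured space; the value `v 0` is
unconstrained. -/
def IsPosHomogeneous (a : ℝ) (v : E → F) : Prop :=
  ∀ r : ℝ, 0 < r → ∀ x : E, x ≠ 0 → v (r • x) = r ^ a • v x

namespace IsPosHomogeneous

protected theorem fderiv (hv : IsPosHomogeneous a v) : IsPosHomogeneous (a - 1) (fderiv ℝ v) := by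
  intro r hr x hx
  have hscale : (fun y ↦ v (r • y)) =ᶠ[𝓝 x] r ^ a • v := by
    filter_upwards [isOpen_compl_singleton.mem_nhds hx] with y hy using hv r hr y hy
  have hderiv : r • fderiv ℝ v (r • x) = r ^ a • fderiv ℝ v x := by
    simpa only [fderiv_comp_smul, fderiv_const_smul_field, Pi.smul_apply]
      using hscale.fderiv_eq (𝕜 := ℝ)
  rw [Real.rpow_sub_one hr.ne', div_eq_inv_mul, mul_smul, ← hderiv, inv_smul_smul₀ hr.ne']

protected theorem iteratedFDeriv (hv : IsPosHomogeneous a v) (k : ℕ) :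
    IsPosHomogeneous (a - k) (iteratedFDeriv ℝ k v) := by
  induction k with
  | zero =>
    intro r hr x hx
    ext m
    simpa using hv r hr x hx
  | succ k ih =>
    intro r hr x hx
    simp only [iteratedFDeriv_succ_eq_comp_left, Function.comp_apply, ih.fderiv r hr x hx,
      map_smul, Nat.cast_add, Nat.cast_one, sub_sub]

theorem fderiv_apply_self (hv : IsPosHomogeneous a v) {x : E} (hx : x ≠ 0)
    (hd : DifferentiableAt ℝ v x) : fderiv ℝ v x x = a • v x := by
  have hray : HasDerivAt (fun r : ℝ ↦ v (r • x)) (fderiv ℝ v x x) 1 := by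
    have hline : HasDerivAt (fun r : ℝ ↦ r • x) x 1 := by
      simpa using (hasDerivAt_id (1 : ℝ)).smul_const x
    exact HasFDerivAt.comp_hasDerivAt 1 (by simpa using hd.hasFDerivAt) hline
  have hpow : HasDerivAt (fun r : ℝ ↦ r ^ a • v x) (a • v x) 1 := by
    simpa using (Real.hasDerivAt_rpow_const (p := a) (Or.inl one_ne_zero)).smul_const (v x)
  refine hray.unique (hpow.congr_of_eventuallyEq ?_)
  filter_upwards [lt_mem_nhds one_pos] with r hr using hv r hr x hx

end IsPosHomogeneous

theorem isPosHomogeneous_intCast_iff {m : ℤ} {f : E → ℂ} :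
    IsPosHomogeneous (m : ℝ) f ↔
      ∀ r : ℝ, 0 < r → ∀ x : E, x ≠ 0 → f (r • x) = (r : ℂ) ^ m * f x := by
  simp [IsPosHomogeneous]

end PosHomogeneous

section SphereMeasure

variable {E F : Type*} [NormedAddCommGroup E] [InnerProductSpace ℝ E] [MeasurableSpace E]
  [BorelSpace E] [NormedAddCommGroup F]

variable (E) in
/-- The surface measure `dS` of the unit sphere, as a measure on the ambient space: the Hausdorff
measure of codimension one, restricted to the sphere. -/
def sphereMeasure : Measure E :=
  μH[(finrank ℝ E : ℝ) - 1].restrict (sphere 0 1)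

theorem ae_sphereMeasure_of_forall_mem_sphere {p : E → Prop} (h : ∀ x ∈ sphere (0 : E) 1, p x) :
    ∀ᵐ x ∂sphereMeasure E, p x :=
  ae_restrict_of_forall_mem isClosed_sphere.measurableSet h

theorem measurePreserving_sphereMeasure (R : E ≃ₗᵢ[ℝ] E) :
    MeasurePreserving R (sphereMeasure E) (sphereMeasure E) := by
  have hsphere : R ⁻¹' sphere 0 1 = sphere 0 1 := by
    ext x
    simp
  have h := (R.toIsometryEquiv.measurePreserving_hausdorffMeasure
    ((finrank ℝ E : ℝ) - 1)).restrict_preimage (s := sphere 0 1) isClosed_sphere.measurableSet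
  rwa [LinearIsometryEquiv.coe_toIsometryEquiv, hsphere] at h

theorem integral_sphereMeasure_comp_linearIsometryEquiv [NormedSpace ℝ F] (R : E ≃ₗᵢ[ℝ] E)
    (f : E → F) : ∫ x, f (R x) ∂sphereMeasure E = ∫ x, f x ∂sphereMeasure E :=
  (measurePreserving_sphereMeasure R).integral_comp R.toHomeomorph.measurableEmbedding f

theorem hausdorffMeasure_image_lt_top_of_contDiff {V W : Type*} [NormedAddCommGroup V]
    [NormedSpace ℝ V] [FiniteDimensional ℝ V] [NormedAddCommGroup W] [NormedSpace ℝ W]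
    [MeasurableSpace W] [BorelSpace W] {f : V → W} (hf : ContDiff ℝ 1 f) {K : Set V}
    (hK : IsCompact K) : μH[finrank ℝ V] (f '' K) < ⊤ := by
  borelize V
  obtain ⟨C, hC⟩ := hf.locallyLipschitz.locallyLipschitzOn.exists_lipschitzOnWith_of_compact hK
  calc μH[finrank ℝ V] (f '' K)
      ≤ (C : ENNReal) ^ (finrank ℝ V : ℝ) * μH[finrank ℝ V] K :=
        hC.hausdorffMeasure_image_le (Nat.cast_nonneg _)
    _ < ⊤ := ENNReal.mul_lt_top (by simp) hK.measure_lt_top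

variable [FiniteDimensional ℝ E]

theorem hausdorffMeasure_hemisphere_lt_top {p : E} (hp : ‖p‖ = 1) :
    μH[(finrank ℝ E : ℝ) - 1] (sphere (0 : E) 1 ∩ {x | ⟪p, x⟫ ≤ 0}) < ⊤ := by
  set H := sphere (0 : E) 1 ∩ {x | ⟪p, x⟫ ≤ 0}
  have hH : IsCompact H := by
    have : ProperSpace E := FiniteDimensional.proper ℝ E
    exact (isCompact_sphere 0 1).inter_right (isClosed_le (by fun_prop) continuous_const)
  have hproj : IsCompact (stereoToFun p '' H) :=
    hH.image_of_continuousOn <| continuousOn_stereoToFun.mono fun x hx ↦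
      (hx.2.trans_lt one_pos).ne
  have hcover : H ⊆ (fun w : (ℝ ∙ p)ᗮ ↦ stereoInvFunAux p w) '' (stereoToFun p '' H) := by
    intro x hx
    have hxp : x ≠ p := by
      rintro rfl
      exact absurd hx.2 (by simp [hp])
    exact ⟨_, mem_image_of_mem _ hx,
      congrArg Subtype.val (stereo_left_inv hp (x := ⟨x, hx.1⟩) hxp)⟩
  have hdim : (finrank ℝ E : ℝ) - 1 = finrank ℝ (ℝ ∙ p)ᗮ := by
    have hsum := (ℝ ∙ p).finrank_add_finrank_orthogonal
    rw [finrank_span_singleton (norm_ne_zero_iff.mp (by simp [hp]))] at hsum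
    simp [← hsum]
  rw [hdim]
  exact (measure_mono hcover).trans_lt <| hausdorffMeasure_image_lt_top_of_contDiff
    (contDiff_stereoInvFunAux.comp (ℝ ∙ p)ᗮ.subtypeL.contDiff) hproj

theorem hausdorffMeasure_sphere_lt_top :
    μH[(finrank ℝ E : ℝ) - 1] (sphere (0 : E) 1) < ⊤ := by
  rcases (sphere (0 : E) 1).eq_empty_or_nonempty with hempty | ⟨p, hp⟩
  · simp [hempty]
  have hp : ‖p‖ = 1 := by simpa using hp
  have hcover : sphere (0 : E) 1 ⊆
      (sphere 0 1 ∩ {x | ⟪p, x⟫ ≤ 0}) ∪ (sphere 0 1 ∩ {x | ⟪-p, x⟫ ≤ 0}) := by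
    intro x hx
    simpa [mem_sphere_zero_iff_norm.mp hx] using le_total ⟪p, x⟫ 0
  exact (measure_mono hcover).trans_lt <| measure_union_lt_top
    (hausdorffMeasure_hemisphere_lt_top hp) (hausdorffMeasure_hemisphere_lt_top (by simpa using hp))

instance : IsFiniteMeasure (sphereMeasure E) :=
  isFiniteMeasure_restrict.mpr hausdorffMeasure_sphere_lt_top.ne

theorem integrable_sphereMeasure {f : E → F} (hf : ContinuousOn f (sphere 0 1)) :
    Integrable f (sphereMeasure E) :=
  have : ProperSpace E := FiniteDimensional.proper ℝ E
  hf.integrableOn_of_subset_isCompact (isCompact_sphere 0 1) isClosed_sphere.measurableSet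
    Subset.rfl hausdorffMeasure_sphere_lt_top.ne

end SphereMeasure

theorem continuousOn_fderiv_of_forall_contDiffAt {E F : Type*} [NormedAddCommGroup E]
    [NormedSpace ℝ E] [NormedAddCommGroup F] [NormedSpace ℝ F] {g : E → F} {s : Set E}
    (hg : ∀ x ∈ s, ContDiffAt ℝ 1 g x) : ContinuousOn (fderiv ℝ g) s := fun x hx ↦
  ((hg x hx).continuousAt_fderiv one_ne_zero).continuousWithinAt

section PlaneRotation

variable {E F : Type*} [NormedAddCommGroup E] [InnerProductSpace ℝ E] [NormedAddCommGroup F]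
  [NormedSpace ℝ F]

/-- The infinitesimal rotation `x ↦ ⟪p, x⟫ w - ⟪w, x⟫ p` in the plane spanned by `p` and `w`. -/
def planeRotation (p w : E) : E →L[ℝ] E :=
  rankOne ℝ w p - rankOne ℝ p w

theorem planeRotation_apply (p w x : E) : planeRotation p w x = ⟪p, x⟫ • w - ⟪w, x⟫ • p :=
  rfl

theorem inner_planeRotation_left (p w x y : E) :
    ⟪planeRotation p w x, y⟫ = -⟪x, planeRotation p w y⟫ := by
  simp only [planeRotation_apply, inner_sub_left, inner_sub_right, real_inner_smul_left,
    real_inner_smul_right, real_inner_comm x]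
  ring

theorem fderiv_inner_smul_apply_planeRotation {g : E → F} {x : E} (hg : DifferentiableAt ℝ g x)
    (p w : E) :
    fderiv ℝ (fun y ↦ ⟪p, y⟫ • g y) x (planeRotation p w x) =
      (⟪p, x⟫ * ⟪p, w⟫ - ⟪w, x⟫ * ⟪p, p⟫) • g x +
        (⟪p, x⟫ ^ 2 • fderiv ℝ g x w - ⟪w, x⟫ • fderiv ℝ g x (⟪p, x⟫ • p)) := by
  have hinner : HasFDerivAt (fun y ↦ ⟪p, y⟫) (innerSL ℝ p) x := (innerSL ℝ p).hasFDerivAt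
  have hprod : HasFDerivAt (fun y ↦ ⟪p, y⟫ • g y) _ x := hinner.smul hg.hasFDerivAt
  rw [hprod.fderiv, planeRotation_apply]
  simp only [add_apply, smul_apply, map_sub, map_smul, ContinuousLinearMap.smulRight_apply,
    innerSL_apply_apply]
  module

theorem sum_fderiv_inner_smul_apply_planeRotation {ι : Type*} [Fintype ι]
    (b : OrthonormalBasis ι ℝ E) {g : E → F} {x : E} (hx : ‖x‖ = 1)
    (hg : DifferentiableAt ℝ g x) (w : E) :
    ∑ i, fderiv ℝ (fun y ↦ ⟪b i, y⟫ • g y) x (planeRotation (b i) w x) =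
      fderiv ℝ g x w - ⟪w, x⟫ • fderiv ℝ g x x - (((finrank ℝ E : ℝ) - 1) * ⟪w, x⟫) • g x := by
  have hvalue : ∑ i, (⟪b i, x⟫ * ⟪b i, w⟫ - ⟪w, x⟫ * ⟪b i, b i⟫) =
      -(((finrank ℝ E : ℝ) - 1) * ⟪w, x⟫) := by
    have hinner : ∑ i, ⟪b i, x⟫ * ⟪b i, w⟫ = ⟪w, x⟫ := by
      rw [← b.sum_inner_mul_inner w x]
      exact Finset.sum_congr rfl fun i _ ↦ by rw [mul_comm, real_inner_comm]
    simp only [Finset.sum_sub_distrib, hinner, real_inner_self_eq_norm_sq, b.norm_eq_one,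
      finrank_eq_card_basis b.toBasis, Finset.sum_const, Finset.card_univ, nsmul_eq_mul]
    ring
  have hnorm : ∑ i, ⟪b i, x⟫ ^ 2 = 1 := by rw [b.sum_sq_inner_right, hx, one_pow]
  simp only [fderiv_inner_smul_apply_planeRotation hg, Finset.sum_add_distrib,
    Finset.sum_sub_distrib (G := F), ← Finset.sum_smul, ← Finset.smul_sum, ← map_sum, hvalue,
    hnorm, b.sum_repr']
  module

end PlaneRotation

section RotationFlow

variable {E : Type*} [NormedAddCommGroup E] [InnerProductSpace ℝ E] [CompleteSpace E]

/-- The one-parameter group `t ↦ exp (tA)` of linear isometries generated by a skew-adjoint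
operator `A`. -/
def rotationFlow (A : skewAdjoint (E →L[ℝ] E)) (t : ℝ) : E ≃ₗᵢ[ℝ] E :=
  let _ : NormedAlgebra ℚ (E →L[ℝ] E) := NormedAlgebra.restrictScalars ℚ ℝ _
  Unitary.linearIsometryEquiv
    ⟨NormedSpace.exp (t • (A : E →L[ℝ] E)),
      NormedSpace.exp_mem_unitary_of_mem_skewAdjoint (t • A).2⟩

theorem rotationFlow_apply (A : skewAdjoint (E →L[ℝ] E)) (t : ℝ) (x : E) :
    rotationFlow A t x = NormedSpace.exp (t • (A : E →L[ℝ] E)) x :=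
  rfl

theorem rotationFlow_zero_apply (A : skewAdjoint (E →L[ℝ] E)) (x : E) :
    rotationFlow A 0 x = x := by
  simp [rotationFlow_apply]

theorem hasDerivAt_rotationFlow_apply (A : skewAdjoint (E →L[ℝ] E)) (t : ℝ) (x : E) :
    HasDerivAt (fun s ↦ rotationFlow A s x) (A.1 (rotationFlow A t x)) t := by
  simpa [rotationFlow_apply] using
    (hasDerivAt_exp_smul_const' (𝕂 := ℝ) (A : E →L[ℝ] E) t).clm_apply (hasDerivAt_const t x)

theorem hasDerivAt_comp_rotationFlow {F : Type*} [NormedAddCommGroup F] [NormedSpace ℝ F]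
    (A : skewAdjoint (E →L[ℝ] E)) {g : E → F} {t : ℝ} {x : E}
    (hg : DifferentiableAt ℝ g (rotationFlow A t x)) :
    HasDerivAt (fun s ↦ g (rotationFlow A s x))
      (fderiv ℝ g (rotationFlow A t x) (A.1 (rotationFlow A t x))) t :=
  hg.hasFDerivAt.comp_hasDerivAt t (hasDerivAt_rotationFlow_apply A t x)

end RotationFlow

section SphereIntegral

variable {E F : Type*} [NormedAddCommGroup E] [InnerProductSpace ℝ E] [FiniteDimensional ℝ E]
  [MeasurableSpace E] [BorelSpace E] [NormedAddCommGroup F] [NormedSpace ℝ F]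

/-- Rotating the sphere does not change `∫ g`; differentiate this along the flow of `A`. -/
theorem integral_fderiv_apply_eq_zero_of_skew {A : E →L[ℝ] E} (hA : ∀ x y, ⟪A x, y⟫ = -⟪x, A y⟫)
    {g : E → F} (hg : ∀ x ∈ sphere (0 : E) 1, ContDiffAt ℝ 1 g x) :
    ∫ x, fderiv ℝ g x (A x) ∂sphereMeasure E = 0 := by
  have : ProperSpace E := FiniteDimensional.proper ℝ E
  let A' : skewAdjoint (E →L[ℝ] E) := ⟨A, by
    rw [skewAdjoint.mem_iff, ContinuousLinearMap.star_eq_adjoint, eq_comm,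
      ContinuousLinearMap.eq_adjoint_iff]
    simp [hA]⟩
  let R := rotationFlow A'
  have hR (t : ℝ) {x : E} (hx : x ∈ sphere 0 1) : R t x ∈ sphere 0 1 := by simpa using hx
  have hgS : ContinuousOn g (sphere 0 1) := fun x hx ↦ (hg x hx).continuousAt.continuousWithinAt
  have hDg : ContinuousOn (fun x ↦ fderiv ℝ g x (A x)) (sphere 0 1) :=
    (continuousOn_fderiv_of_forall_contDiffAt hg).clm_apply A.continuous.continuousOn
  obtain ⟨C, hC⟩ := (isCompact_sphere (0 : E) 1).exists_bound_of_continuousOn hDg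
  have hint {f : E → F} (hf : ContinuousOn f (sphere 0 1)) (t : ℝ) :
      Integrable (fun x ↦ f (R t x)) (sphereMeasure E) :=
    integrable_sphereMeasure (hf.comp (R t).continuous.continuousOn fun _ ↦ hR t)
  have hderiv := (hasDerivAt_integral_of_dominated_loc_of_deriv_le (μ := sphereMeasure E)
    (F := fun t x ↦ g (R t x)) (x₀ := 0) (bound := fun _ ↦ C) univ_mem
    (Eventually.of_forall fun t ↦ (hint hgS t).aestronglyMeasurable) (hint hgS 0)
    (hint hDg 0).aestronglyMeasurable
    (ae_sphereMeasure_of_forall_mem_sphere fun x hx t _ ↦ hC _ (hR t hx))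
    (integrable_const C)
    (ae_sphereMeasure_of_forall_mem_sphere fun x hx t _ ↦
      hasDerivAt_comp_rotationFlow A' ((hg _ (hR t hx)).differentiableAt one_ne_zero))).2
  simp only [R, integral_sphereMeasure_comp_linearIsometryEquiv, rotationFlow_zero_apply]
    at hderiv
  exact hderiv.unique (hasDerivAt_const _ _)

/-- The integrand is the surface divergence of the tangential part of the vector field `g w`. -/
theorem integral_sphere_divergence_eq_zero {g : E → F}
    (hg : ∀ x ∈ sphere (0 : E) 1, ContDiffAt ℝ 1 g x) (w : E) :
    ∫ x, (fderiv ℝ g x w - ⟪w, x⟫ • fderiv ℝ g x x - (((finrank ℝ E : ℝ) - 1) * ⟪w, x⟫) • g x)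
      ∂sphereMeasure E = 0 := by
  let b := stdOrthonormalBasis ℝ E
  have hprod (i) : ∀ x ∈ sphere (0 : E) 1, ContDiffAt ℝ 1 (fun y ↦ ⟪b i, y⟫ • g y) x :=
    fun x hx ↦ (innerSL ℝ (b i)).contDiff.contDiffAt.smul (hg x hx)
  calc _ = ∫ x, ∑ i, fderiv ℝ (fun y ↦ ⟪b i, y⟫ • g y) x (planeRotation (b i) w x)
        ∂sphereMeasure E := integral_congr_ae <| ae_sphereMeasure_of_forall_mem_sphere fun x hx ↦
          (sum_fderiv_inner_smul_apply_planeRotation b (mem_sphere_zero_iff_norm.mp hx)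
            ((hg x hx).differentiableAt one_ne_zero) w).symm
    _ = ∑ i, ∫ x, fderiv ℝ (fun y ↦ ⟪b i, y⟫ • g y) x (planeRotation (b i) w x)
        ∂sphereMeasure E := integral_finsetSum _ fun i _ ↦ integrable_sphereMeasure <|
          (continuousOn_fderiv_of_forall_contDiffAt (hprod i)).clm_apply (by fun_prop)
    _ = 0 := Finset.sum_eq_zero fun i _ ↦
          integral_fderiv_apply_eq_zero_of_skew (inner_planeRotation_left (b i) w) (hprod i)

theorem IsPosHomogeneous.integral_fderiv_apply_sphere_eq_zero {v : E → F}
    (hv : IsPosHomogeneous (1 - (finrank ℝ E : ℝ)) v) (hd : ∀ x ≠ 0, ContDiffAt ℝ 1 v x) (w : E) :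
    ∫ x, fderiv ℝ v x w ∂sphereMeasure E = 0 := by
  have hne {x : E} (hx : x ∈ sphere 0 1) : x ≠ 0 := ne_of_mem_sphere hx one_ne_zero
  rw [← integral_sphere_divergence_eq_zero (fun x hx ↦ hd x (hne hx)) w]
  refine integral_congr_ae <| ae_sphereMeasure_of_forall_mem_sphere fun x hx ↦ ?_
  dsimp only
  rw [hv.fderiv_apply_self (hne hx) ((hd x (hne hx)).differentiableAt one_ne_zero)]
  module

theorem residue_vanishing_general [CompleteSpace F] {k : ℕ} (hk : 1 ≤ k) {u : E → F}
    (hu : ContDiffOn ℝ k u {0}ᶜ) (hhom : IsPosHomogeneous ((k : ℝ) - finrank ℝ E) u)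
    (m : Fin k → E) :
    ∫ x in sphere 0 1, iteratedFDeriv ℝ k u x m ∂μH[(finrank ℝ E : ℝ) - 1] = 0 := by
  obtain ⟨k, rfl⟩ := Nat.exists_eq_add_of_le' hk
  have hd (x : E) (hx : x ≠ 0) : ContDiffAt ℝ 1 (iteratedFDeriv ℝ k u) x :=
    (hu.contDiffAt (isOpen_compl_singleton.mem_nhds hx)).iteratedFDeriv_right (by
      push_cast
      rw [add_comm])
  have hhom' : IsPosHomogeneous (1 - (finrank ℝ E : ℝ)) (iteratedFDeriv ℝ k u) := by
    convert hhom.iteratedFDeriv k using 1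
    push_cast
    ring
  have hint : Integrable (fun x ↦ fderiv ℝ (iteratedFDeriv ℝ k u) x (m 0)) (sphereMeasure E) :=
    integrable_sphereMeasure <| (continuousOn_fderiv_of_forall_contDiffAt fun x hx ↦
      hd x (ne_of_mem_sphere hx one_ne_zero)).clm_apply continuousOn_const
  calc _ = ∫ x, fderiv ℝ (iteratedFDeriv ℝ k u) x (m 0) (Fin.tail m) ∂sphereMeasure E := rfl
    _ = (∫ x, fderiv ℝ (iteratedFDeriv ℝ k u) x (m 0) ∂sphereMeasure E) (Fin.tail m) :=
      (ContinuousMultilinearMap.integral_apply hint _).symm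
    _ = 0 := by rw [hhom'.integral_fderiv_apply_sphere_eq_zero hd, zero_apply]

end SphereIntegral

theorem multiPartialDeriv_eq_iteratedFDeriv {n : ℕ} {s : Set (EuclideanSpace ℝ (Fin n))}
    (hs : IsOpen s) {u : EuclideanSpace ℝ (Fin n) → ℂ} (L : List (Fin n))
    (hu : ContDiffOn ℝ L.length u s) {x : EuclideanSpace ℝ (Fin n)} (hx : x ∈ s) :
    multiPartialDeriv L u x =
      iteratedFDeriv ℝ L.length u x fun i ↦ EuclideanSpace.single (L.get i) 1 := by
  induction L generalizing x with
  | nil => rfl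
  | cons i L ih =>
    have hlt : (L.length : WithTop ℕ∞) < (i :: L).length := by
      exact_mod_cast L.length.lt_succ_self
    have hd : DifferentiableAt ℝ (iteratedFDeriv ℝ L.length u) x :=
      (hu.contDiffAt (hs.mem_nhds hx)).differentiableAt_iteratedFDeriv hlt
    have hnear : multiPartialDeriv L u =ᶠ[𝓝 x]
        fun y ↦ iteratedFDeriv ℝ L.length u y fun i ↦ EuclideanSpace.single (L.get i) 1 := by
      filter_upwards [hs.mem_nhds hx] with y hy using ih (hu.of_le hlt.le) hy
    calc multiPartialDeriv (i :: L) u x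
        = fderiv ℝ (multiPartialDeriv L u) x (EuclideanSpace.single i 1) := rfl
      _ = _ := by
        rw [hnear.fderiv_eq]
        exact (hd.iteratedFDeriv_succ_apply_left'
          (m := fun j ↦ EuclideanSpace.single ((i :: L).get j) 1)).symm

/-- residue vanishing, Corollary 2.9, smooth case: if `u : ℝⁿ \ {0} → ℂ`
is smooth and positively homogeneous of degree `−n + k` with `k ≥ 1`, then for every
multi-index `β` with `|β| = k` (encoded as a list of `k` coordinate directions) the
iterated partial derivative `∂^β u` has vanishing integral over the unit sphere
(with its `(n−1)`-dimensional Hausdorff surface measure). -/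
theorem residue_vanishing {n : ℕ} (hn : 1 ≤ n) (k : ℕ) (hk : 1 ≤ k)
    (u : EuclideanSpace ℝ (Fin n) → ℂ)
    (hu : ContDiffOn ℝ (⊤ : ℕ∞) u {(0 : EuclideanSpace ℝ (Fin n))}ᶜ)
    (hhom : ∀ r : ℝ, 0 < r → ∀ ξ : EuclideanSpace ℝ (Fin n), ξ ≠ 0 →
      u (r • ξ) = (r : ℂ) ^ ((k : ℤ) - (n : ℤ)) * u ξ) :
    ∀ L : List (Fin n), L.length = k →
      ∫ ξ in Metric.sphere (0 : EuclideanSpace ℝ (Fin n)) 1,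
        multiPartialDeriv L u ξ ∂μH[(n : ℝ) - 1] = 0 := by
  rintro L rfl
  have huk : ContDiffOn ℝ L.length u {0}ᶜ := hu.of_le (by exact_mod_cast le_top)
  rw [setIntegral_congr_fun isClosed_sphere.measurableSet fun x hx ↦
    multiPartialDeriv_eq_iteratedFDeriv isOpen_compl_singleton L huk
      (ne_of_mem_sphere hx one_ne_zero)]
  simpa using residue_vanishing_general hk huk
    (by simpa using isPosHomogeneous_intCast_iff.mpr hhom) _
end
end

section
/- Meromorphic continuation of the Laplace transform of a tame log-polyhomogeneous scaling expansion (scalar model of the Pollicott–Ruelle resonance expansion of Section 2.4): let p ∈ ℤ, let (a_k)_{k ≥ p} and (b_k)_{k ≥ p} be complex sequences, and let g : [0, ∞) → ℂ be continuous and satisfy: for every integer N ≥ p and every ε > 0 there is C ≥ 0 with |g(t) − Σ_{k=p}^N e^{−kt}(a_k + t·b_k)| ≤ C e^{−(N+1−ε)t} for all t ≥ 0. Then: (i) for every s ∈ ℂ with Re s > −p the function t ↦ e^{−st} g(t) is integrable on [0, ∞); and (ii) there exists a function F, holomorphic on ℂ \ {−k : k ∈ ℤ, k ≥ p}, such that F(s)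 = ∫₀^∞ e^{−st} g(t) dt whenever Re s > −p, and for every integer N ≥ p the function s ↦ F(s) − Σ_{k=p}^N ( a_k/(s+k) + b_k/(s+k)² ) extends holomorphically to the half-plane {s : Re s > −(N+1)}. In particular F is meromorphic on ℂ with poles of order at most 2 located in {−k : k ≥ p}. -/
open Set MeasureTheory

noncomputable section

/-! Subtracting the first terms of the expansion from `g` leaves a remainder that is
`O(e^{-(N+1-ε)t})`, so its Laplace integral converges and is holomorphic on `Re s > -(N+1)`. The
subtracted terms `e^{-kt}(a_k + t b_k)` have the Laplace transforms `a_k/(s+k) + b_k/(s+k)²`, which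
make sense for all `s ≠ -k`. Adding these rational functions back gives, for each `N`, a
continuation of the Laplace transform of `g` to `Re s > -(N+1)`; the continuations for different
`N` agree where both are defined, hence glue to a function on the whole plane. -/

section Continuation

open Filter Asymptotics
open scoped Topology

variable {E : Type*} [NormedAddCommGroup E] [NormedSpace ℂ E]

/-- Absolute convergence of the Laplace integral of `g` at `s`, in analogy with
`MellinConvergent`. -/
def LaplaceConvergent (g : ℝ → E) (s : ℂ) : Prop :=
  IntegrableOn (fun t : ℝ => Complex.exp (-s * (t : ℂ)) • g t) (Ici 0)

/-- The Laplace transform `∫₀^∞ e^{-st} g(t) dt`; it is `0` by convention where the integral does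
not converge absolutely. -/
def laplaceTransform (g : ℝ → E) (s : ℂ) : E :=
  ∫ t in Ici (0 : ℝ), Complex.exp (-s * (t : ℂ)) • g t

/-- The Laplace integral of `g` converges at `s` and its value is `m`, in analogy with
`HasMellin`. -/
def HasLaplace (g : ℝ → E) (s : ℂ) (m : E) : Prop :=
  LaplaceConvergent g s ∧ laplaceTransform g s = m

/-- The finite part of a log-polyhomogeneous expansion: the terms `e^{-kt}(a_k + t b_k)` with
exponent `k` in `S`. -/
def expLogSum (a b : ℤ → E) (S : Finset ℤ) (t : ℝ) : E :=
  ∑ k ∈ S, Complex.exp (-(k : ℂ) * (t : ℂ)) • (a k + (t : ℂ) • b k)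

/-- The principal parts `a_k/(s+k) + b_k/(s+k)²` with `k` in `S`. At `s = -k` the corresponding
term is `0`, since `0⁻¹ = 0`. -/
def polarSum (a b : ℤ → E) (S : Finset ℤ) (s : ℂ) : E :=
  ∑ k ∈ S, ((s + (k : ℂ))⁻¹ • a k + ((s + (k : ℂ)) ^ 2)⁻¹ • b k)

/-- `g` has the log-polyhomogeneous expansion `∑_{k ≥ p} e^{-kt}(a_k + t b_k)` as `t → ∞`. -/
def HasExpLogExpansion (p : ℤ) (a b : ℤ → E) (g : ℝ → E) : Prop :=
  ∀ N : ℤ, p ≤ N → ∀ ε : ℝ, 0 < ε →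
    (fun t => g t - expLogSum a b (Finset.Icc p N) t) =O[atTop]
      fun t => Real.exp (-((N : ℝ) + 1 - ε) * t)

/-- The Laplace transform of `g` with the terms in `S` transformed by hand: the Laplace
integral of the remainder plus the principal parts. -/
def subtractedLaplace (a b : ℤ → E) (g : ℝ → E) (S : Finset ℤ) (s : ℂ) : E :=
  laplaceTransform (fun t => g t - expLogSum a b S t) s + polarSum a b S s

/-- The continuation of the Laplace transform of `g` to the plane: at `s`, enough terms are
subtracted for the remaining integral to converge there. -/
def laplaceContinuation (p : ℤ) (a b : ℤ → E) (g : ℝ → E) (s : ℂ) : E :=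
  subtractedLaplace a b g (Finset.Icc p (max p ⌈-s.re⌉)) s

theorem norm_cexp_neg_mul_ofReal (s : ℂ) (t : ℝ) :
    ‖Complex.exp (-s * (t : ℂ))‖ = Real.exp (-s.re * t) := by
  simp [Complex.norm_exp]

theorem mul_exp_neg_mul_le_inv {δ : ℝ} (hδ : 0 < δ) (t : ℝ) : t * Real.exp (-δ * t) ≤ δ⁻¹ := by
  have key : δ * t * Real.exp (-(δ * t)) ≤ 1 :=
    (Real.mul_exp_neg_le_exp_neg_one _).trans (Real.exp_le_one_iff.2 (by norm_num))
  rw [inv_eq_one_div, le_div_iff₀' hδ, ← mul_assoc, neg_mul]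
  exact key

theorem norm_cexp_smul_ofReal_smul_le {s₀ s : ℂ} {δ t : ℝ} (hδ : 0 < δ) (ht : 0 ≤ t)
    (hs : s₀.re + δ ≤ s.re) (x : E) :
    ‖Complex.exp (-s * (t : ℂ)) • (t : ℂ) • x‖ ≤ δ⁻¹ * ‖Complex.exp (-s₀ * (t : ℂ)) • x‖ := by
  simp only [norm_smul, norm_cexp_neg_mul_ofReal, Complex.norm_of_nonneg ht]
  calc Real.exp (-s.re * t) * (t * ‖x‖)
      ≤ Real.exp (-(s₀.re + δ) * t) * (t * ‖x‖) := by gcongr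
    _ = t * Real.exp (-δ * t) * (Real.exp (-s₀.re * t) * ‖x‖) := by
        rw [neg_add, add_mul, Real.exp_add]; ring
    _ ≤ δ⁻¹ * (Real.exp (-s₀.re * t) * ‖x‖) := by
        gcongr; exact mul_exp_neg_mul_le_inv hδ t

namespace LaplaceConvergent

variable {g : ℝ → E} {s₀ s : ℂ}

theorem aestronglyMeasurable (hg : LaplaceConvergent g s₀) :
    AEStronglyMeasurable g (volume.restrict (Ici 0)) := by
  have hexp : Continuous fun t : ℝ => Complex.exp (s₀ * (t : ℂ)) := by fun_prop
  refine (hexp.aestronglyMeasurable.smul hg.1).congr (.of_forall fun t => ?_)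
  simp [smul_smul, ← Complex.exp_add]

theorem of_re_le (hg : LaplaceConvergent g s₀) (hs : s₀.re ≤ s.re) : LaplaceConvergent g s := by
  have hexp : Continuous fun t : ℝ => Complex.exp (-s * (t : ℂ)) := by fun_prop
  refine Integrable.mono hg (hexp.aestronglyMeasurable.smul hg.aestronglyMeasurable)
    (ae_restrict_of_forall_mem measurableSet_Ici fun t (ht : 0 ≤ t) => ?_)
  simp only [norm_smul, norm_cexp_neg_mul_ofReal]
  gcongr

theorem ofReal_smul (hg : LaplaceConvergent g s₀) (hs : s₀.re < s.re) :
    LaplaceConvergent (fun t => (t : ℂ) • g t) s := by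
  have hexp : Continuous fun t : ℝ => Complex.exp (-s * (t : ℂ)) := by fun_prop
  have hmeas := hexp.aestronglyMeasurable.smul
    (Complex.continuous_ofReal.aestronglyMeasurable.smul hg.aestronglyMeasurable)
  exact Integrable.mono' ((Integrable.norm hg).const_mul (s.re - s₀.re)⁻¹) hmeas
    (ae_restrict_of_forall_mem measurableSet_Ici fun t ht =>
      norm_cexp_smul_ofReal_smul_le (sub_pos.2 hs) ht (by linarith) (g t))

theorem hasDerivAt_laplaceTransform (hg : LaplaceConvergent g s₀) (hs : s₀.re < s.re) :
    HasDerivAt (laplaceTransform g) (-laplaceTransform (fun t => (t : ℂ) • g t) s) s := by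
  obtain ⟨σ, hσ₀, hσs⟩ := exists_between hs
  have hnhds : {z : ℂ | σ < z.re} ∈ 𝓝 s :=
    (isOpen_lt continuous_const Complex.continuous_re).mem_nhds hσs
  have hderiv (t : ℝ) (z : ℂ) : HasDerivAt (fun z : ℂ => Complex.exp (-z * (t : ℂ)) • g t)
      (-(Complex.exp (-z * (t : ℂ)) • (t : ℂ) • g t)) z := by
    convert ((hasDerivAt_neg z).mul_const (t : ℂ)).cexp.smul_const (g t) using 1
    rw [neg_one_mul, mul_neg, neg_smul, mul_smul]
  have hbound (t : ℝ) (ht : 0 ≤ t) (z : ℂ) (hz : σ < z.re) :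
      ‖-(Complex.exp (-z * (t : ℂ)) • (t : ℂ) • g t)‖ ≤
        (σ - s₀.re)⁻¹ * ‖Complex.exp (-s₀ * (t : ℂ)) • g t‖ := by
    rw [norm_neg]
    exact norm_cexp_smul_ofReal_smul_le (sub_pos.2 hσ₀) ht (by linarith) (g t)
  have hdiff := (hasDerivAt_integral_of_dominated_loc_of_deriv_le
    (F := fun (z : ℂ) (t : ℝ) => Complex.exp (-z * (t : ℂ)) • g t) hnhds
    (eventually_of_mem hnhds fun z hz => (hg.of_re_le (hσ₀.trans hz).le).1)
    (hg.of_re_le hs.le) (Integrable.neg (hg.ofReal_smul hs)).1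
    (ae_restrict_of_forall_mem measurableSet_Ici hbound)
    ((Integrable.norm hg).const_mul _) (.of_forall fun t z _ => hderiv t z)).2
  rwa [integral_neg] at hdiff

theorem of_isBigO_exp {c : ℝ} (hg : LocallyIntegrableOn g (Ici 0))
    (hO : g =O[atTop] fun t => Real.exp (-c * t)) (hs : -c < s.re) : LaplaceConvergent g s := by
  have hlocal : LocallyIntegrableOn (fun t : ℝ => Complex.exp (-s * (t : ℂ)) • g t) (Ici 0) :=
    hg.continuousOn_smul isClosed_Ici.isLocallyClosed (by fun_prop)
  have hnorm : (fun t : ℝ => Complex.exp (-s * (t : ℂ))) =O[atTop]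
      fun t => Real.exp (-s.re * t) :=
    .of_norm_le fun t => (norm_cexp_neg_mul_ofReal s t).le
  have hdecay : (fun t : ℝ => Complex.exp (-s * (t : ℂ)) • g t) =O[atTop]
      fun t => Real.exp (-(s.re + c) * t) :=
    (hnorm.smul hO).congr_right fun t => by rw [smul_eq_mul, ← Real.exp_add]; ring_nf
  exact hlocal.integrableOn_of_isBigO_atTop hdecay
    ⟨Ioi 0, Ioi_mem_atTop 0, exp_neg_integrableOn_Ioi 0 (by linarith)⟩

end LaplaceConvergent

namespace HasLaplace

variable {f g : ℝ → E} {s : ℂ} {m n : E}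

theorem add (hf : HasLaplace f s m) (hg : HasLaplace g s n) :
    HasLaplace (fun t => f t + g t) s (m + n) := by
  obtain ⟨hf, rfl⟩ := hf
  obtain ⟨hg, rfl⟩ := hg
  simp only [HasLaplace, LaplaceConvergent, laplaceTransform, smul_add]
  exact ⟨Integrable.add hf hg, integral_add hf hg⟩

theorem sum {ι : Type*} {S : Finset ι} {f : ι → ℝ → E} {m : ι → E}
    (hf : ∀ i ∈ S, HasLaplace (f i) s (m i)) :
    HasLaplace (fun t => ∑ i ∈ S, f i t) s (∑ i ∈ S, m i) := by
  simp only [HasLaplace, LaplaceConvergent, laplaceTransform, Finset.smul_sum]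
  refine ⟨integrable_finsetSum S fun i hi => (hf i hi).1, ?_⟩
  rw [integral_finsetSum S fun i hi => (hf i hi).1]
  exact Finset.sum_congr rfl fun i hi => (hf i hi).2

theorem cexp_smul {w : ℂ} (hg : HasLaplace g (s + w) m) :
    HasLaplace (fun t => Complex.exp (-w * (t : ℂ)) • g t) s m := by
  simpa only [HasLaplace, LaplaceConvergent, laplaceTransform, smul_smul, ← Complex.exp_add,
    ← add_mul, ← neg_add] using hg

end HasLaplace

section Terms

variable [CompleteSpace E] {s : ℂ}

theorem hasLaplace_const (hs : 0 < s.re) (x : E) : HasLaplace (fun _ => x) s (s⁻¹ • x) := by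
  have hre : (-s).re < 0 := by simpa using hs
  have hint : IntegrableOn (fun t : ℝ => Complex.exp (-s * (t : ℂ))) (Ici 0) :=
    (integrableOn_Ici_iff_integrableOn_Ioi (by simp)).2 (integrableOn_exp_mul_complex_Ioi hre 0)
  refine ⟨Integrable.smul_const hint x, ?_⟩
  rw [laplaceTransform, integral_smul_const, integral_Ici_eq_integral_Ioi,
    integral_exp_mul_complex_Ioi hre 0]
  simp

theorem hasLaplace_ofReal_smul_const (hs : 0 < s.re) (x : E) :
    HasLaplace (fun t => (t : ℂ) • x) s ((s ^ 2)⁻¹ • x) := by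
  have hhalf : 0 < (s / 2).re := by simpa using hs
  have hlt : (s / 2).re < s.re := by simpa using hs
  have hconv := (hasLaplace_const hhalf x).1
  refine ⟨hconv.ofReal_smul hlt, ?_⟩
  have hs₀ : s ≠ 0 := by rintro rfl; simp at hs
  have hinv : HasDerivAt (laplaceTransform fun _ => x) (-(s ^ 2)⁻¹ • x) s := by
    refine ((hasDerivAt_inv hs₀).smul_const x).congr_of_eventuallyEq ?_
    filter_upwards [(isOpen_lt continuous_const Complex.continuous_re).mem_nhds hs] with z hz
    exact (hasLaplace_const hz x).2
  simpa only [neg_smul, neg_inj] using (hconv.hasDerivAt_laplaceTransform hlt).unique hinv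

theorem hasLaplace_expLogSum {S : Finset ℤ} (hs : ∀ k ∈ S, -(k : ℝ) < s.re) (a b : ℤ → E) :
    HasLaplace (expLogSum a b S) s (polarSum a b S s) := by
  refine HasLaplace.sum fun k hk => ?_
  have hre : 0 < (s + (k : ℂ)).re := by
    rw [Complex.add_re, Complex.intCast_re]; linarith [hs k hk]
  exact ((hasLaplace_const hre (a k)).add (hasLaplace_ofReal_smul_const hre (b k))).cexp_smul

end Terms

theorem continuous_expLogSum (a b : ℤ → E) (S : Finset ℤ) : Continuous (expLogSum a b S) := by
  unfold expLogSum; fun_prop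

theorem differentiableAt_polarSum (a b : ℤ → E) {S : Finset ℤ} {s : ℂ}
    (hs : ∀ k ∈ S, s ≠ -(k : ℂ)) : DifferentiableAt ℂ (polarSum a b S) s := by
  refine DifferentiableAt.fun_sum fun k hk => ?_
  have hk₁ : s + (k : ℂ) ≠ 0 := fun h => hs k hk (eq_neg_of_add_eq_zero_left h)
  have hk₂ : (s + (k : ℂ)) ^ 2 ≠ 0 := pow_ne_zero 2 hk₁
  fun_prop (disch := assumption)

section Subtraction

variable [CompleteSpace E] {a b : ℤ → E} {g : ℝ → E} {S T : Finset ℤ} {s : ℂ}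

theorem hasLaplace_sub_expLogSum_of_subset (hST : S ⊆ T) (hs : ∀ k ∈ T \ S, -(k : ℝ) < s.re)
    (hT : LaplaceConvergent (fun t => g t - expLogSum a b T t) s) :
    HasLaplace (fun t => g t - expLogSum a b S t) s
      (laplaceTransform (fun t => g t - expLogSum a b T t) s + polarSum a b (T \ S) s) := by
  convert HasLaplace.add ⟨hT, rfl⟩ (hasLaplace_expLogSum hs a b) using 2 with t
  simp only [expLogSum, Finset.sum_sdiff_eq_sub hST]
  abel

theorem subtractedLaplace_eq_of_subset (hST : S ⊆ T) (hs : ∀ k ∈ T \ S, -(k : ℝ) < s.re)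
    (hT : LaplaceConvergent (fun t => g t - expLogSum a b T t) s) :
    subtractedLaplace a b g S s = subtractedLaplace a b g T s := by
  rw [subtractedLaplace, (hasLaplace_sub_expLogSum_of_subset hST hs hT).2, subtractedLaplace,
    add_assoc]
  congr 1
  exact Finset.sum_sdiff hST

end Subtraction

@[simp]
theorem subtractedLaplace_empty (a b : ℤ → E) (g : ℝ → E) :
    subtractedLaplace a b g ∅ = laplaceTransform g := by
  ext s; simp [subtractedLaplace, expLogSum, polarSum]

theorem neg_lt_re_of_mem_Icc_sdiff_Icc {p N M k : ℤ} {s : ℂ} (hs : -((N : ℝ) + 1) < s.re)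
    (hk : k ∈ Finset.Icc p M \ Finset.Icc p N) : -(k : ℝ) < s.re := by
  have hNk : N + 1 ≤ k := by simp only [Finset.mem_sdiff, Finset.mem_Icc] at hk; omega
  have hNk' : (N : ℝ) + 1 ≤ k := by exact_mod_cast hNk
  linarith

theorem neg_max_ceil_add_one_lt_re (p : ℤ) (s : ℂ) :
    -(((max p ⌈-s.re⌉ : ℤ) : ℝ) + 1) < s.re := by
  have hceil : -s.re ≤ ((max p ⌈-s.re⌉ : ℤ) : ℝ) := Int.ceil_le.1 (le_max_right _ _)
  linarith

theorem hasExpLogExpansion_of_norm_le {p : ℤ} {a b : ℤ → E} {g : ℝ → E}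
    (h : ∀ N : ℤ, p ≤ N → ∀ ε : ℝ, 0 < ε → ∃ C : ℝ, ∀ t : ℝ, 0 ≤ t →
      ‖g t - expLogSum a b (Finset.Icc p N) t‖ ≤ C * Real.exp (-((N : ℝ) + 1 - ε) * t)) :
    HasExpLogExpansion p a b g := by
  intro N hN ε hε
  obtain ⟨C, hC⟩ := h N hN ε hε
  refine .of_bound C ?_
  filter_upwards [eventually_ge_atTop 0] with t ht
  simpa only [Real.norm_eq_abs, Real.abs_exp] using hC t ht

namespace HasExpLogExpansion

variable {p N M : ℤ} {a b : ℤ → E} {g : ℝ → E} {s : ℂ}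

theorem laplaceConvergent_sub_expLogSum (h : HasExpLogExpansion p a b g)
    (hg : LocallyIntegrableOn g (Ici 0)) (hN : p ≤ N) (hs : -((N : ℝ) + 1) < s.re) :
    LaplaceConvergent (fun t => g t - expLogSum a b (Finset.Icc p N) t) s :=
  .of_isBigO_exp
    (hg.sub ((continuous_expLogSum a b _).locallyIntegrable.locallyIntegrableOn _))
    (h N hN ((s.re + (N + 1)) / 2) (by linarith)) (by linarith)

theorem differentiableAt_laplaceTransform_sub_expLogSum (h : HasExpLogExpansion p a b g)
    (hg : LocallyIntegrableOn g (Ici 0)) (hN : p ≤ N) (hs : -((N : ℝ) + 1) < s.re) :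
    DifferentiableAt ℂ
      (laplaceTransform fun t => g t - expLogSum a b (Finset.Icc p N) t) s := by
  obtain ⟨σ, hσN, hσs⟩ := exists_between hs
  exact ((h.laplaceConvergent_sub_expLogSum hg hN (s := σ) hσN).hasDerivAt_laplaceTransform
    hσs).differentiableAt

variable [CompleteSpace E]

theorem laplaceConvergent (h : HasExpLogExpansion p a b g) (hg : LocallyIntegrableOn g (Ici 0))
    (hs : -(p : ℝ) < s.re) : LaplaceConvergent g s := by
  have hsub := hasLaplace_sub_expLogSum_of_subset (Finset.empty_subset _) (by simpa using hs)
    (h.laplaceConvergent_sub_expLogSum hg le_rfl (by linarith : -((p : ℝ) + 1) < s.re))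
  simpa [expLogSum] using hsub.1

theorem subtractedLaplace_Icc_eq (h : HasExpLogExpansion p a b g)
    (hg : LocallyIntegrableOn g (Ici 0)) (hM : p ≤ M) (hNM : N ≤ M)
    (hs : -((N : ℝ) + 1) < s.re) :
    subtractedLaplace a b g (Finset.Icc p N) s = subtractedLaplace a b g (Finset.Icc p M) s := by
  have hNM' : (N : ℝ) ≤ M := by exact_mod_cast hNM
  exact subtractedLaplace_eq_of_subset (Finset.Icc_subset_Icc_right hNM)
    (fun _ => neg_lt_re_of_mem_Icc_sdiff_Icc hs)
    (h.laplaceConvergent_sub_expLogSum hg hM (by linarith))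

theorem laplaceContinuation_eq_subtractedLaplace (h : HasExpLogExpansion p a b g)
    (hg : LocallyIntegrableOn g (Ici 0)) (hs : -((N : ℝ) + 1) < s.re) :
    laplaceContinuation p a b g s = subtractedLaplace a b g (Finset.Icc p N) s := by
  have hp : p ≤ max p ⌈-s.re⌉ := le_max_left _ _
  rcases le_total N (max p ⌈-s.re⌉) with hN | hN
  · exact (h.subtractedLaplace_Icc_eq hg hp hN hs).symm
  · exact h.subtractedLaplace_Icc_eq hg (hp.trans hN) hN (neg_max_ceil_add_one_lt_re p s)

theorem laplaceContinuation_eq_laplaceTransform (h : HasExpLogExpansion p a b g)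
    (hg : LocallyIntegrableOn g (Ici 0)) (hs : -(p : ℝ) < s.re) :
    laplaceContinuation p a b g s = laplaceTransform g s := by
  have hs' : -(((p - 1 : ℤ) : ℝ) + 1) < s.re := by simpa using hs
  simpa using h.laplaceContinuation_eq_subtractedLaplace hg hs'

theorem differentiableAt_laplaceContinuation (h : HasExpLogExpansion p a b g)
    (hg : LocallyIntegrableOn g (Ici 0)) (hs : ∀ k : ℤ, p ≤ k → s ≠ -(k : ℂ)) :
    DifferentiableAt ℂ (laplaceContinuation p a b g) s := by
  have hre := neg_max_ceil_add_one_lt_re p s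
  have hpolar : DifferentiableAt ℂ (polarSum a b (Finset.Icc p (max p ⌈-s.re⌉))) s :=
    differentiableAt_polarSum a b fun k hk => hs k (Finset.mem_Icc.1 hk).1
  refine ((h.differentiableAt_laplaceTransform_sub_expLogSum hg (le_max_left _ _) hre).add
    hpolar).congr_of_eventuallyEq ?_
  filter_upwards [(isOpen_lt continuous_const Complex.continuous_re).mem_nhds hre] with z hz
  exact h.laplaceContinuation_eq_subtractedLaplace hg hz

end HasExpLogExpansion

theorem laplace_meromorphic_continuation_general [CompleteSpace E] {p : ℤ} {a b : ℤ → E}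
    {g : ℝ → E} (hg : LocallyIntegrableOn g (Ici 0)) (h : HasExpLogExpansion p a b g) :
    (∀ s : ℂ, -(p : ℝ) < s.re → LaplaceConvergent g s) ∧
    ∃ F : ℂ → E,
      DifferentiableOn ℂ F {s : ℂ | ∀ k : ℤ, p ≤ k → s ≠ -(k : ℂ)} ∧
      (∀ s : ℂ, -(p : ℝ) < s.re → F s = laplaceTransform g s) ∧
      ∀ N : ℤ, p ≤ N → ∃ G : ℂ → E,
        DifferentiableOn ℂ G {s : ℂ | -((N : ℝ) + 1) < s.re} ∧
        ∀ s : ℂ, -((N : ℝ) + 1) < s.re → (∀ k ∈ Finset.Icc p N, s ≠ -(k : ℂ)) →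
          G s = F s - polarSum a b (Finset.Icc p N) s := by
  refine ⟨fun s => h.laplaceConvergent hg, laplaceContinuation p a b g,
    fun s hs => (h.differentiableAt_laplaceContinuation hg hs).differentiableWithinAt,
    fun s => h.laplaceContinuation_eq_laplaceTransform hg, fun N hN =>
    ⟨laplaceTransform fun t => g t - expLogSum a b (Finset.Icc p N) t, fun s hs =>
      (h.differentiableAt_laplaceTransform_sub_expLogSum hg hN hs).differentiableWithinAt,
      fun s hs _ => ?_⟩⟩
  rw [h.laplaceContinuation_eq_subtractedLaplace hg hs, subtractedLaplace, add_sub_cancel_right]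

end Continuation

/-- meromorphic continuation of the Laplace transform of a tame
log-polyhomogeneous scaling expansion; scalar model of the Pollicott–Ruelle resonance
expansion: if `g : [0,∞) → ℂ` is continuous and admits, for every `N ≥ p` and `ε > 0`,
the expansion `g(t) = Σ_{k=p}^N e^{−kt}(a_k + t b_k) + O(e^{−(N+1−ε)t})`, then
(i) `t ↦ e^{−st} g(t)` is integrable on `[0,∞)` for `Re s > −p`, and (ii) the Laplace
transform extends to a function `F` holomorphic on `ℂ \ {−k : k ∈ ℤ, k ≥ p}` such that
for each `N ≥ p` the difference `F(s) − Σ_{k=p}^N (a_k/(s+k) + b_k/(s+k)²)` extends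
holomorphically to `{Re s > −(N+1)}`. -/
theorem laplace_meromorphic_continuation (p : ℤ) (a b : ℤ → ℂ) (g : ℝ → ℂ)
    (hg : ContinuousOn g (Set.Ici (0 : ℝ)))
    (hexp : ∀ N : ℤ, p ≤ N → ∀ ε : ℝ, 0 < ε → ∃ C : ℝ, 0 ≤ C ∧ ∀ t : ℝ, 0 ≤ t →
      ‖g t - ∑ k ∈ Finset.Icc p N,
          Complex.exp (-(k : ℂ) * (t : ℂ)) * (a k + (t : ℂ) * b k)‖
        ≤ C * Real.exp (-((N : ℝ) + 1 - ε) * t)) :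
    (∀ s : ℂ, -(p : ℝ) < s.re →
      IntegrableOn (fun t : ℝ => Complex.exp (-s * (t : ℂ)) * g t) (Set.Ici 0)) ∧
    ∃ F : ℂ → ℂ,
      DifferentiableOn ℂ F {s : ℂ | ∀ k : ℤ, p ≤ k → s ≠ -(k : ℂ)} ∧
      (∀ s : ℂ, -(p : ℝ) < s.re →
        F s = ∫ t in Set.Ici (0 : ℝ), Complex.exp (-s * (t : ℂ)) * g t) ∧
      ∀ N : ℤ, p ≤ N → ∃ G : ℂ → ℂ,
        DifferentiableOn ℂ G {s : ℂ | -((N : ℝ) + 1) < s.re} ∧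
        ∀ s : ℂ, -((N : ℝ) + 1) < s.re → (∀ k ∈ Finset.Icc p N, s ≠ -(k : ℂ)) →
          G s = F s - ∑ k ∈ Finset.Icc p N,
            (a k / (s + (k : ℂ)) + b k / (s + (k : ℂ)) ^ 2) := by
  simpa only [laplaceTransform, LaplaceConvergent, polarSum, smul_eq_mul, ← div_eq_inv_mul] using
    laplace_meromorphic_continuation_general (hg.locallyIntegrableOn measurableSet_Ici)
      (hasExpLogExpansion_of_norm_le fun N hN ε hε => (hexp N hN ε hε).imp fun _ => And.right)
end
end

section
/- Exponential contraction towards the diagonal along the backward flow (Step 1 of the proof of Proposition 2.5, with f the squared Euclidean distance to the diagonal): let X be an Euler vector field on an open set U ⊆ ℝ^d × ℝ^d. Then there exists an open set 𝒰 with Δ ∩ U ⊆ 𝒰 ⊆ U such that: (i) every C¹ curve γ : [0, T] → U with γ′(t) = −X(γ(t)) and γ(0) ∈ 𝒰 remains in 𝒰; and (ii) writing γ(t) = (x(t), y(t)) ∈ ℝ^d × ℝ^d, every C¹ curve γ : [0, T] → 𝒰 with γ′(t) = −X(γ(t)) satisfies |x(t) − y(t)|² ≤ e^{−(3/2)t}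 |x(0) − y(0)|² for all t ∈ [0, T]. -/
open Set

noncomputable section

/-!
Write `X q = (0, y - x + e q)` for `q = (x, y)`. Testing the Euler condition on the functions
`(x, y) ↦ L (y - x)` shows that `e` and its derivative vanish on the diagonal, so strict
differentiability gives `‖e q‖ = o(‖y - x‖)` there. Hence for every `κ < 2` the squared distance
`‖x - y‖ ^ 2` grows at rate at least `κ` along `X` near the diagonal, and Grönwall's inequality
gives decay at rate `κ` along `-X`. Since `x` is constant along the flow, the open tubes
`{(x, y) | dist x x₀ < r ∧ dist x y < r}` that are contained in this region are backward invariant;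
`𝒰` is their union.
-/

open Filter Topology Asymptotics

section Tube

variable {α : Type*} [PseudoMetricSpace α]

/-- The tube of radius `r` about the diagonal over the ball of radius `r` around `x`. Unlike a ball
of the product, it only constrains the second coordinate through the distance to the diagonal. -/
def diagTube (x : α) (r : ℝ) : Set (α × α) :=
  {q | dist q.1 x < r ∧ dist q.1 q.2 < r}

/-- The union of all tubes about the diagonal that are contained in `V`. -/
def tubularCore (V : Set (α × α)) : Set (α × α) :=
  {q | ∃ x r, q ∈ diagTube x r ∧ diagTube x r ⊆ V}

lemma isOpen_diagTube (x : α) (r : ℝ) : IsOpen (diagTube x r) :=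
  (isOpen_lt (continuous_fst.dist continuous_const) continuous_const).inter
    (isOpen_lt (continuous_fst.dist continuous_snd) continuous_const)

lemma diagTube_half_subset_ball (x : α) (r : ℝ) :
    diagTube x (r / 2) ⊆ Metric.ball (x, x) r := by
  rintro ⟨y, z⟩ ⟨hy : dist y x < r / 2, hz : dist y z < r / 2⟩
  rw [Metric.mem_ball, Prod.dist_eq, max_lt_iff]
  constructor
  · linarith [dist_nonneg (x := y) (y := x)]
  · linarith [dist_triangle_left z x y]

lemma isOpen_tubularCore (V : Set (α × α)) : IsOpen (tubularCore V) :=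
  isOpen_iff_mem_nhds.2 fun _ ⟨x, r, hq, hV⟩ =>
    mem_of_superset ((isOpen_diagTube x r).mem_nhds hq) fun _ hq' => ⟨x, r, hq', hV⟩

lemma tubularCore_subset (V : Set (α × α)) : tubularCore V ⊆ V :=
  fun _ ⟨_, _, hq, hV⟩ => hV hq

lemma diag_mem_tubularCore {V : Set (α × α)} {x : α} (hV : V ∈ 𝓝 (x, x)) :
    (x, x) ∈ tubularCore V := by
  obtain ⟨r, hr, hball⟩ := Metric.mem_nhds_iff.1 hV
  refine ⟨x, r / 2, ?_, (diagTube_half_subset_ball x r).trans hball⟩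
  simpa [diagTube] using hr

end Tube

section Interval

variable {f f' : ℝ → ℝ} {a b : ℝ}

lemma hasDerivWithinAt_Ici_of_Icc {E : Type*} [NormedAddCommGroup E] [NormedSpace ℝ E]
    {g : ℝ → E} {g' : E} {t : ℝ} (hg : HasDerivWithinAt g g' (Icc a b) t) (ht : t ∈ Ico a b) :
    HasDerivWithinAt g g' (Ici t) t :=
  hg.mono_of_mem_nhdsWithin (Icc_mem_nhdsGE_of_mem ht)

lemma image_le_left_of_deriv_neg_of_mem_Ioo {R : ℝ}
    (hf : ∀ t ∈ Icc a b, HasDerivWithinAt f (f' t) (Icc a b) t) (hR : f a < R)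
    (hneg : ∀ t ∈ Icc a b, f t ∈ Ioo (f a) R → f' t < 0) :
    ∀ t ∈ Icc a b, f t ≤ f a := by
  have le_of_mem_Ioo (c : ℝ) (hc : c ∈ Ioo (f a) R) : ∀ t ∈ Icc a b, f t ≤ c :=
    image_le_of_deriv_right_lt_deriv_boundary (HasDerivWithinAt.continuousOn hf)
      (fun t ht => hasDerivWithinAt_Ici_of_Icc (hf t (Ico_subset_Icc_self ht)) ht) hc.1.le
      (fun t => hasDerivAt_const t c)
      (fun t ht htc => hneg t (Ico_subset_Icc_self ht) (htc ▸ hc))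
  intro t ht
  refine le_of_forall_gt_imp_ge_of_dense fun c hc => ?_
  obtain ⟨c', hac', hc'⟩ := exists_between (lt_min hc hR)
  exact (le_of_mem_Ioo c' ⟨hac', hc'.trans_le (min_le_right c R)⟩ t ht).trans
    (hc'.le.trans (min_le_left c R))

lemma le_exp_mul_of_deriv_le {K : ℝ}
    (hf : ∀ t ∈ Icc a b, HasDerivWithinAt f (f' t) (Icc a b) t)
    (hle : ∀ t ∈ Icc a b, f' t ≤ K * f t) :
    ∀ t ∈ Icc a b, f t ≤ Real.exp (K * (t - a)) * f a := by
  intro t ht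
  have hgronwall := le_gronwallBound_of_liminf_deriv_right_le (K := K) (ε := 0)
    (HasDerivWithinAt.continuousOn hf)
    (fun s hs _ hr => (hasDerivWithinAt_Ici_of_Icc
      (hf s (Ico_subset_Icc_self hs)) hs).liminf_right_slope_le hr) le_rfl
    (fun s hs => by simpa using hle s (Ico_subset_Icc_self hs)) t ht
  rwa [gronwallBound_ε0, mul_comm] at hgronwall

end Interval

section FirstOrder

variable {E : Type*} [NormedAddCommGroup E] [NormedSpace ℝ E] {X : E × E → E × E} {U : Set (E × E)}

/-- The normal component of `X` minus that of the model Euler field `(x, y) ↦ (0, y - x)`. -/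
def eulerDefect (X : E × E → E × E) (q : E × E) : E :=
  (X q).2 - (X q).1 - (q.2 - q.1)

/-- Euler vector fields on an arbitrary normed space: `X` is vertical on `U` and agrees with
`(x, y) ↦ (0, y - x)` to first order along the diagonal. Smoothness is only asked for in the form of
strict differentiability at points of the diagonal. -/
structure IsStrictEulerVF (X : E × E → E × E) (U : Set (E × E)) : Prop where
  fiber : ∀ q ∈ U, (X q).1 = 0
  eulerDefect_eq_zero : ∀ p ∈ diagonal E ∩ U, eulerDefect X p = 0
  hasStrictFDerivAt_eulerDefect : ∀ p ∈ diagonal E ∩ U,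
    HasStrictFDerivAt (eulerDefect X) (0 : E × E →L[ℝ] E) p

namespace IsStrictEulerVF

lemma isLittleO_eulerDefect (hX : IsStrictEulerVF X U) (hU : IsOpen U) {p : E × E}
    (hp : p ∈ diagonal E ∩ U) :
    eulerDefect X =o[𝓝 p] fun q => q.1 - q.2 := by
  have hdiag : ((p.1, p.1) : E × E) = p := Prod.ext rfl hp.1
  have htendsto_diag : Tendsto (fun q : E × E => (q.1, q.1)) (𝓝 p) (𝓝 p) := by
    have hcont : Continuous fun q : E × E => (q.1, q.1) := by fun_prop
    simpa only [hdiag] using hcont.tendsto p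
  have hzero : ∀ᶠ q in 𝓝 p, eulerDefect X (q.1, q.1) = 0 :=
    (htendsto_diag.eventually (hU.mem_nhds hp.2)).mono fun q hq =>
      hX.eulerDefect_eq_zero _ ⟨rfl, hq⟩
  have hsub := (hX.hasStrictFDerivAt_eulerDefect p hp).isLittleO.comp_tendsto
    (tendsto_id.prodMk_nhds htendsto_diag)
  refine (hsub.congr' (hzero.mono fun q hq => ?_) .rfl).trans_isBigO (isBigO_of_le _ fun q => ?_)
  · simp [hq]
  · simp [Prod.norm_def, norm_sub_rev]

lemma fst_eq_of_isIntegralCurveOn_neg (hX : IsStrictEulerVF X U) {a b : ℝ} {γ : ℝ → E × E}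
    (hγ : IsIntegralCurveOn γ (fun _ q => -X q) (Icc a b)) (hγU : MapsTo γ (Icc a b) U) :
    ∀ t ∈ Icc a b, (γ t).1 = (γ a).1 := by
  have hderiv : ∀ t ∈ Icc a b, HasDerivWithinAt (fun s => (γ s).1) 0 (Icc a b) t := by
    intro t ht
    simpa [hX.fiber _ (hγU ht), Function.comp_def] using
      (ContinuousLinearMap.fst ℝ E E).hasFDerivAt.comp_hasDerivWithinAt t (hγ t ht)
  exact constant_of_has_deriv_right_zero (HasDerivWithinAt.continuousOn hderiv) fun t ht =>
    hasDerivWithinAt_Ici_of_Icc (hderiv t (Ico_subset_Icc_self ht)) ht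

end IsStrictEulerVF

end FirstOrder

section Expansion

variable {E : Type*} [NormedAddCommGroup E] [InnerProductSpace ℝ E] {X : E × E → E × E}
  {U : Set (E × E)} {κ a b : ℝ} {γ : ℝ → E × E}

/-- The points at which the squared distance to the diagonal, normalised as `‖x - y‖ ^ 2`, grows at
relative rate at least `κ` along `X`. -/
def expansionSet (X : E × E → E × E) (κ : ℝ) : Set (E × E) :=
  {q | κ * ‖q.1 - q.2‖ ^ 2 ≤ 2 * inner ℝ (q.1 - q.2) ((X q).1 - (X q).2)}

lemma mem_expansionSet_of_norm_eulerDefect_le {q : E × E}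
    (hq : ‖eulerDefect X q‖ ≤ (1 - κ / 2) * ‖q.1 - q.2‖) : q ∈ expansionSet X κ := by
  have hnormal : (X q).1 - (X q).2 = (q.1 - q.2) - eulerDefect X q := by
    unfold eulerDefect
    abel
  have hinner : inner ℝ (q.1 - q.2) (eulerDefect X q) ≤ (1 - κ / 2) * ‖q.1 - q.2‖ ^ 2 :=
    calc inner ℝ (q.1 - q.2) (eulerDefect X q)
        ≤ ‖q.1 - q.2‖ * ‖eulerDefect X q‖ := real_inner_le_norm _ _
      _ ≤ ‖q.1 - q.2‖ * ((1 - κ / 2) * ‖q.1 - q.2‖) := by gcongr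
      _ = (1 - κ / 2) * ‖q.1 - q.2‖ ^ 2 := by ring
  rw [expansionSet, mem_ofPred_eq, hnormal, inner_sub_right, real_inner_self_eq_norm_sq]
  linarith

lemma IsStrictEulerVF.expansionSet_mem_nhds (hX : IsStrictEulerVF X U) (hU : IsOpen U)
    (hκ : κ < 2) {p : E × E} (hp : p ∈ diagonal E ∩ U) : expansionSet X κ ∈ 𝓝 p :=
  ((hX.isLittleO_eulerDefect hU hp).def (by linarith : 0 < 1 - κ / 2)).mono fun _ =>
    mem_expansionSet_of_norm_eulerDefect_le

lemma hasDerivWithinAt_norm_sub_sq_of_isIntegralCurveOn_neg {s : Set ℝ} {t : ℝ}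
    (hγ : IsIntegralCurveOn γ (fun _ q => -X q) s) (ht : t ∈ s) :
    HasDerivWithinAt (fun t => ‖(γ t).1 - (γ t).2‖ ^ 2)
      (-(2 * inner ℝ ((γ t).1 - (γ t).2) ((X (γ t)).1 - (X (γ t)).2))) s t := by
  have hsub : HasDerivWithinAt (fun t => (γ t).1 - (γ t).2) (-(X (γ t)).1 - -(X (γ t)).2) s t :=
    (ContinuousLinearMap.fst ℝ E E - ContinuousLinearMap.snd ℝ E E).hasFDerivAt
      |>.comp_hasDerivWithinAt t (hγ t ht)
  simpa only [← neg_sub', inner_neg_right, mul_neg] using hsub.norm_sq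

lemma norm_sq_le_exp_mul_of_mapsTo_expansionSet
    (hγ : IsIntegralCurveOn γ (fun _ q => -X q) (Icc a b))
    (hγκ : MapsTo γ (Icc a b) (expansionSet X κ)) :
    ∀ t ∈ Icc a b,
      ‖(γ t).1 - (γ t).2‖ ^ 2 ≤ Real.exp (-κ * (t - a)) * ‖(γ a).1 - (γ a).2‖ ^ 2 :=
  le_exp_mul_of_deriv_le (fun _ => hasDerivWithinAt_norm_sub_sq_of_isIntegralCurveOn_neg hγ)
    fun _ ht => (neg_le_neg (hγκ ht)).trans_eq (neg_mul ..).symm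

lemma mapsTo_diagTube_of_fst_eq (hκ : 0 < κ) {x : E} {r : ℝ}
    (hr : diagTube x r ⊆ expansionSet X κ)
    (hγ : IsIntegralCurveOn γ (fun _ q => -X q) (Icc a b))
    (hfst : ∀ t ∈ Icc a b, (γ t).1 = (γ a).1) (ha : γ a ∈ diagTube x r) :
    MapsTo γ (Icc a b) (diagTube x r) := by
  obtain ⟨hax, har⟩ := ha
  rw [dist_eq_norm] at har
  have hr0 : 0 ≤ r := (norm_nonneg _).trans har.le
  have mem_tube_of_sq_lt : ∀ t ∈ Icc a b, ‖(γ t).1 - (γ t).2‖ ^ 2 < r ^ 2 →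
      γ t ∈ diagTube x r := fun t ht hlt =>
    ⟨by rwa [hfst t ht], by rw [dist_eq_norm]; exact lt_of_pow_lt_pow_left₀ 2 hr0 hlt⟩
  have har_sq : ‖(γ a).1 - (γ a).2‖ ^ 2 < r ^ 2 := by gcongr
  have hle : ∀ t ∈ Icc a b, ‖(γ t).1 - (γ t).2‖ ^ 2 ≤ ‖(γ a).1 - (γ a).2‖ ^ 2 := by
    refine image_le_left_of_deriv_neg_of_mem_Ioo
      (fun _ => hasDerivWithinAt_norm_sub_sq_of_isIntegralCurveOn_neg hγ) har_sq fun t ht hmem => ?_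
    have hexpand := hr (mem_tube_of_sq_lt t ht hmem.2)
    have hpos : 0 < κ * ‖(γ t).1 - (γ t).2‖ ^ 2 :=
      mul_pos hκ ((sq_nonneg _).trans_lt hmem.1)
    exact neg_neg_of_pos (hpos.trans_le hexpand)
  exact fun t ht => mem_tube_of_sq_lt t ht ((hle t ht).trans_lt har_sq)

lemma IsStrictEulerVF.mapsTo_tubularCore (hX : IsStrictEulerVF X U) (hκ : 0 < κ)
    {V : Set (E × E)} (hV : V ⊆ expansionSet X κ)
    (hγ : IsIntegralCurveOn γ (fun _ q => -X q) (Icc a b)) (hγU : MapsTo γ (Icc a b) U)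
    (ha : γ a ∈ tubularCore V) : MapsTo γ (Icc a b) (tubularCore V) := by
  obtain ⟨x, r, hax, hr⟩ := ha
  exact fun t ht => ⟨x, r, mapsTo_diagTube_of_fst_eq hκ (hr.trans hV) hγ
    (hX.fst_eq_of_isIntegralCurveOn_neg hγ hγU) hax ht, hr⟩

end Expansion

section Euclidean

variable {d : ℕ} {X : Pt d → Pt d} {U : Set (Pt d)}

namespace VanishesToOrder

variable {m : ℕ} {g : Pt d → ℝ} {p : Pt d}

lemma eq_zero (hg : VanishesToOrder m g U) (hm : 0 < m) (hp : p ∈ Diag d ∩ U) : g p = 0 := by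
  simpa using congrArg (fun D => D 0) (hg 0 hm p hp)

lemma fderiv_eq_zero (hg : VanishesToOrder m g U) (hm : 1 < m) (hp : p ∈ Diag d ∩ U) :
    fderiv ℝ g p = 0 := by
  refine ContinuousLinearMap.ext fun v => ?_
  simpa using congrArg (fun D => D fun _ => v) (hg 1 hm p hp)

end VanishesToOrder

lemma vfApply_sub_eq_comp_eulerDefect (X : Pt d → Pt d) (L : EuclideanSpace ℝ (Fin d) →L[ℝ] ℝ) :
    (fun q => vfApply X (fun p => L (p.2 - p.1)) q - L (q.2 - q.1)) =
      L ∘ eulerDefect X := by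
  funext q
  have hderiv : HasFDerivAt (fun p : Pt d => L (p.2 - p.1)) (L ∘L (.snd ℝ _ _ - .fst ℝ _ _)) q :=
    L.hasFDerivAt.comp q (hasFDerivAt_snd.sub hasFDerivAt_fst)
  rw [vfApply, hderiv.fderiv]
  simp [eulerDefect]

namespace IsEulerVF

lemma contDiffOn_eulerDefect (hX : IsEulerVF X U) :
    ContDiffOn ℝ (⊤ : ℕ∞) (eulerDefect X) U :=
  (hX.smooth.snd.sub hX.smooth.fst).sub (contDiff_snd.sub contDiff_fst).contDiffOn

lemma vanishesToOrder_comp_eulerDefect (hX : IsEulerVF X U)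
    (L : EuclideanSpace ℝ (Fin d) →L[ℝ] ℝ) : VanishesToOrder 2 (L ∘ eulerDefect X) U := by
  rw [← vfApply_sub_eq_comp_eulerDefect]
  refine hX.euler _ (L.contDiff.comp (contDiff_snd.sub contDiff_fst)).contDiffOn ?_
  rintro p ⟨hp : p.1 = p.2, -⟩
  simp [hp]

lemma isStrictEulerVF (hX : IsEulerVF X U) (hU : IsOpen U) : IsStrictEulerVF X U where
  fiber := hX.fiber
  eulerDefect_eq_zero p hp := SeparatingDual.eq_zero_of_forall_dual_eq_zero (R := ℝ) fun L =>
    (hX.vanishesToOrder_comp_eulerDefect L).eq_zero two_pos hp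
  hasStrictFDerivAt_eulerDefect p hp := by
    have hsmooth : ContDiffAt ℝ (⊤ : ℕ∞) (eulerDefect X) p :=
      hX.contDiffOn_eulerDefect.contDiffAt (hU.mem_nhds hp.2)
    have hstrict := hsmooth.hasStrictFDerivAt (by simp)
    suffices hzero : fderiv ℝ (eulerDefect X) p = 0 by rwa [hzero] at hstrict
    refine ContinuousLinearMap.ext fun v =>
      SeparatingDual.eq_zero_of_forall_dual_eq_zero (R := ℝ) fun L => ?_
    have hcomp : L ∘L fderiv ℝ (eulerDefect X) p = 0 :=
      (L.hasFDerivAt.comp p hstrict.hasFDerivAt).fderiv.symm.trans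
        ((hX.vanishesToOrder_comp_eulerDefect L).fderiv_eq_zero one_lt_two hp)
    exact congrArg (fun A => A v) hcomp

end IsEulerVF

end Euclidean

theorem euler_exponential_contraction_general {E : Type*} [NormedAddCommGroup E]
    [InnerProductSpace ℝ E] {X : E × E → E × E} {U : Set (E × E)} (hU : IsOpen U)
    (hX : IsStrictEulerVF X U) {κ : ℝ} (hκ : 0 < κ) (hκ2 : κ < 2) :
    ∃ 𝒰 : Set (E × E), IsOpen 𝒰 ∧ diagonal E ∩ U ⊆ 𝒰 ∧ 𝒰 ⊆ U ∧
      (∀ T : ℝ, ∀ γ : ℝ → E × E, MapsTo γ (Icc 0 T) U →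
        IsIntegralCurveOn γ (fun _ q => -X q) (Icc 0 T) →
        γ 0 ∈ 𝒰 → MapsTo γ (Icc 0 T) 𝒰) ∧
      (∀ T : ℝ, ∀ γ : ℝ → E × E, MapsTo γ (Icc 0 T) 𝒰 →
        IsIntegralCurveOn γ (fun _ q => -X q) (Icc 0 T) →
        ∀ t ∈ Icc 0 T,
          ‖(γ t).1 - (γ t).2‖ ^ 2 ≤ Real.exp (-κ * t) * ‖(γ 0).1 - (γ 0).2‖ ^ 2) := by
  have hcore : tubularCore (U ∩ expansionSet X κ) ⊆ U ∩ expansionSet X κ := tubularCore_subset _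
  refine ⟨tubularCore (U ∩ expansionSet X κ), isOpen_tubularCore _, ?_,
    hcore.trans inter_subset_left, ?_, ?_⟩
  · rintro ⟨x, y⟩ hp
    obtain rfl : x = y := hp.1
    exact diag_mem_tubularCore
      (inter_mem (hU.mem_nhds hp.2) (hX.expansionSet_mem_nhds hU hκ2 hp))
  · exact fun T γ hγU hγ h0 => hX.mapsTo_tubularCore hκ inter_subset_right hγ hγU h0
  · intro T γ hγcore hγ t ht
    simpa only [sub_zero] using norm_sq_le_exp_mul_of_mapsTo_expansionSet hγ
      (hγcore.mono_right (hcore.trans inter_subset_right)) t ht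

/-- exponential contraction towards the diagonal along the backward
flow: if `X` is an Euler vector field on an open set `U ⊆ ℝ^d × ℝ^d`, there is an open
set `𝒰` with `Δ ∩ U ⊆ 𝒰 ⊆ U` such that (i) backward-flow curves starting in `𝒰` stay in
`𝒰`, and (ii) along any backward-flow curve `γ(t) = (x(t), y(t))` contained in `𝒰` one has
`|x(t) − y(t)|² ≤ e^{−(3/2)t} |x(0) − y(0)|²`. -/
theorem euler_exponential_contraction {d : ℕ} {X : Pt d → Pt d} {U : Set (Pt d)}
    (hU : IsOpen U) (hX : IsEulerVF X U) :
    ∃ 𝒰 : Set (Pt d), IsOpen 𝒰 ∧ Diag d ∩ U ⊆ 𝒰 ∧ 𝒰 ⊆ U ∧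
      (∀ T : ℝ, 0 ≤ T → ∀ γ : ℝ → Pt d,
        (∀ t ∈ Icc (0 : ℝ) T, γ t ∈ U) →
        (∀ t ∈ Icc (0 : ℝ) T, HasDerivWithinAt γ (-(X (γ t))) (Icc (0 : ℝ) T) t) →
        γ 0 ∈ 𝒰 → ∀ t ∈ Icc (0 : ℝ) T, γ t ∈ 𝒰) ∧
      (∀ T : ℝ, 0 ≤ T → ∀ γ : ℝ → Pt d,
        (∀ t ∈ Icc (0 : ℝ) T, γ t ∈ 𝒰) →
        (∀ t ∈ Icc (0 : ℝ) T, HasDerivWithinAt γ (-(X (γ t))) (Icc (0 : ℝ) T) t) →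
        ∀ t ∈ Icc (0 : ℝ) T,
          ‖(γ t).1 - (γ t).2‖ ^ 2 ≤ Real.exp (-(3 / 2) * t) * ‖(γ 0).1 - (γ 0).2‖ ^ 2) := by
  obtain ⟨𝒰, hopen, hdiag, hsub, hinv, hdecay⟩ := euler_exponential_contraction_general hU
    (hX.isStrictEulerVF hU) (κ := 3 / 2) (by norm_num) (by norm_num)
  exact ⟨𝒰, hopen, hdiag, hsub, fun T _ => hinv T, fun T _ => hdecay T⟩
end
end
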